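/- arXiv:1701.02616 — 2 statements merged into one kernel-verified Lean document; each statement's English description precedes it below -/
import Mathlib

section
/- Let Ω ⊂ ℂ be a C¹ K-quasidisc, let φ : 𝔻 → Ω be a conformal mapping, and let 2 < α satisfy α(K² − 1) < 2K². Then for every test function f on Ω, ∬_Ω |f − f_Ω|² dxdy ≤ (4/π^{2/α}) · ((2α−2)/(α−2))^{(2α−2)/α} · (∬_𝔻 |φ′(z)|^α dxdy)^{2/α} · ∬_Ω |∇f|² dxdy. (This is the Rayleigh-quotient form of the bound 1/μ₁(Ω) ≤ (4/π^{2/α})((2α−2)/(α−2))^{(2α−2)/α} Q(α,Ω)^{2/α} for the first nontrivial Neumann eigenvalue, where Q(α,Ω) = ∬_𝔻 |φ′(z)|^α dxdy is the hyperbolic α-dilatation of Ω.) -/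
open MeasureTheory Metric Real
open scoped ENNReal NNReal

/-- A `C¹` `K`-quasiconformal homeomorphism of `ℂ` onto itself: a `C¹`
bijection of the plane with everywhere positive Jacobian determinant satisfying
`‖Dφ(z)‖² ≤ K·J(z,φ)` everywhere. -/
def IsC1QCPlane (K : ℝ) (φ : ℂ → ℂ) : Prop :=
  ContDiff ℝ 1 φ ∧ Function.Bijective φ ∧
  ∀ z : ℂ, 0 < (fderiv ℝ φ z).det ∧ ‖fderiv ℝ φ z‖ ^ 2 ≤ K * (fderiv ℝ φ z).det

open scoped Topology


lemma qd_inv_holo (φ : ℂ → ℂ) (hφd : DifferentiableOn ℂ φ (Metric.ball 0 1))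
    (hφi : Set.InjOn φ (Metric.ball 0 1)) :
    ∃ ψ : ℂ → ℂ, (∀ z ∈ ball (0:ℂ) 1, ψ (φ z) = z) ∧
      DifferentiableOn ℂ ψ (φ '' ball 0 1) ∧ IsOpen (φ '' ball 0 1) := by
  have hconv : IsPreconnected (ball (0:ℂ) 1) := (convex_ball _ _).isPreconnected
  have han : AnalyticOnNhd ℂ φ (ball 0 1) := hφd.analyticOnNhd isOpen_ball
  have hop : ∀ s ⊆ ball (0:ℂ) 1, IsOpen s → IsOpen (φ '' s) := by
    rcases han.is_constant_or_isOpen hconv with ⟨w, hw⟩ | h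
    · exfalso
      have h0 : (0:ℂ) ∈ ball (0:ℂ) 1 := by simp
      have h1 : (1/2:ℂ) ∈ ball (0:ℂ) 1 := by simp; norm_num
      have := hφi h0 h1 ((hw _ h0).trans (hw _ h1).symm)
      norm_num at this
    · exact h
  have hopen := hop _ subset_rfl isOpen_ball
  refine ⟨Function.invFunOn φ (ball 0 1), hφi.leftInvOn_invFunOn, ?_, hopen⟩
  set ψ := Function.invFunOn φ (ball 0 1)
  have hli : ∀ z ∈ ball (0:ℂ) 1, ψ (φ z) = z := hφi.leftInvOn_invFunOn
  have hcont : ∀ z ∈ ball (0:ℂ) 1, ContinuousAt ψ (φ z) := by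
    intro z hz
    rw [ContinuousAt, hli z hz]
    intro s hs
    obtain ⟨t, hts, hto, hzt⟩ := _root_.mem_nhds_iff.1 hs
    have : φ '' (t ∩ ball 0 1) ∈ 𝓝 (φ z) :=
      (hop _ Set.inter_subset_right (hto.inter isOpen_ball)).mem_nhds ⟨z, ⟨hzt, hz⟩, rfl⟩
    rw [Filter.mem_map]
    filter_upwards [this]
    rintro _ ⟨x, ⟨hxt, hx⟩, rfl⟩
    rw [Set.mem_preimage]
    rw [hli x hx]; exact hts hxt
  have hri : ∀ w ∈ φ '' ball (0:ℂ) 1, φ (ψ w) = w := by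
    rintro _ ⟨x, hx, rfl⟩
    rw [hli x hx]
  have hdiff : ∀ z ∈ ball (0:ℂ) 1, deriv φ z ≠ 0 → DifferentiableAt ℂ ψ (φ z) := by
    intro z hz hne
    have h1 : HasDerivAt φ (deriv φ z) (ψ (φ z)) := by
      rw [hli z hz]
      exact (hφd.differentiableAt (isOpen_ball.mem_nhds hz)).hasDerivAt
    refine (HasDerivAt.of_local_left_inverse (hcont z hz) h1 hne ?_).differentiableAt
    filter_upwards [hopen.mem_nhds ⟨z, hz, rfl⟩] with w hw using hri w hw
  rintro _ ⟨z0, hz0, rfl⟩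
  apply DifferentiableAt.differentiableWithinAt
  have hev : ∀ᶠ z in 𝓝[≠] z0, deriv φ z ≠ 0 := by
    rcases (han.deriv z0 hz0).eventually_eq_zero_or_eventually_ne_zero with h | h
    · exfalso
      obtain ⟨ε, hε, hb⟩ := Metric.eventually_nhds_iff_ball.1 (h.and (isOpen_ball.mem_nhds hz0))
      have hd : ∀ y ∈ ball z0 ε, DifferentiableAt ℂ φ y := fun y hy =>
        hφd.differentiableAt (isOpen_ball.mem_nhds (hb y hy).2)
      have hy : z0 + (ε/2 : ℝ) ∈ ball z0 ε := by
        simp [abs_of_pos hε, hε]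
      have h2 := (convex_ball z0 ε).is_const_of_fderivWithin_eq_zero (𝕜 := ℂ) (f := φ)
        (fun y hy => (hd y hy).differentiableWithinAt) (fun y hy => by
          rw [fderivWithin_of_isOpen isOpen_ball hy]
          ext; simp [(hb y hy).1]) (mem_ball_self hε) hy
      have := hφi hz0 (hb _ hy).2 h2
      simp [hε.ne'] at this
    · exact h
  refine (Complex.analyticAt_of_differentiable_on_punctured_nhds_of_continuousAt ?_ (hcont z0 hz0)).differentiableAt
  have h3 : ∀ᶠ z in 𝓝 z0, z ≠ z0 → deriv φ z ≠ 0 := eventually_nhdsWithin_iff.1 hev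
  have h4 := (hcont z0 hz0)
  rw [ContinuousAt, hli z0 hz0] at h4
  rw [eventually_nhdsWithin_iff]
  filter_upwards [h4.eventually h3, hopen.mem_nhds ⟨z0, hz0, rfl⟩] with w hw1 hw2 hne
  obtain ⟨z, hz, rfl⟩ := hw2
  rw [hli z hz] at hw1
  exact hdiff z hz (hw1 (fun h => hne (by rw [h]; rfl)))

/-- C¹ defining function -/
lemma qd_defining (Φ : ℂ → ℂ) (h1 : ContDiff ℝ 1 Φ) (h2 : Function.Bijective Φ)
    (h3 : ∀ z, 0 < (fderiv ℝ Φ z).det) :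
    ∃ r : ℂ → ℝ, ContDiff ℝ 1 r ∧ (Φ '' ball 0 1 = {w | r w < 0}) ∧ IsCompact {w | r w = 0} ∧
      IsCompact {w | r w ≤ 0} ∧
      (∃ w, r w = 0) ∧ (∀ w, r w = 0 → fderiv ℝ r w ≠ 0) := by
  have hstrict : ∀ z, HasStrictFDerivAt Φ
      (((fderiv ℝ Φ z).toContinuousLinearEquivOfDetNeZero (h3 z).ne' : ℂ ≃L[ℝ] ℂ) : ℂ →L[ℝ] ℂ) z := by
    intro z
    rw [ContinuousLinearMap.coe_toContinuousLinearEquivOfDetNeZero]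
    exact h1.contDiffAt.hasStrictFDerivAt (by norm_num)
  have hop : IsOpenMap Φ := isOpenMap_of_hasStrictFDerivAt_equiv hstrict
  let H : ℂ ≃ₜ ℂ := (Equiv.ofBijective Φ h2).toHomeomorphOfContinuousOpen h1.continuous hop
  have hHΦ : ∀ z, H z = Φ z := fun z => rfl
  have hsymm : ContDiff ℝ 1 H.symm := by
    rw [contDiff_iff_contDiffAt]
    intro w
    refine H.toOpenPartialHomeomorph.contDiffAt_symm (f₀' := (fderiv ℝ Φ (H.symm w)).toContinuousLinearEquivOfDetNeZero (h3 _).ne') (by simp) ?_ ?_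
    · exact (hstrict (H.symm w)).hasFDerivAt
    · exact h1.contDiffAt
  have himg : ∀ P : ℝ → Prop, {w | P (‖H.symm w‖^2 - 1)} = Φ '' {z | P (‖z‖^2 - 1)} := by
    intro P
    ext w
    constructor
    · intro h
      exact ⟨H.symm w, h, by rw [← hHΦ]; simp⟩
    · rintro ⟨z, hz, rfl⟩
      show P _
      rw [← hHΦ]; simpa using hz
  refine ⟨fun w => ‖H.symm w‖^2 - 1, ?_, ?_, ?_, ?_, ⟨H 1, by simp⟩, ?_⟩
  · exact (hsymm.norm_sq ℝ).sub contDiff_const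
  · rw [himg (fun x => x < 0)]
    congr 1
    ext z
    simp
  · rw [himg (fun x => x = 0)]
    refine IsCompact.image ?_ h1.continuous
    convert isCompact_sphere (0:ℂ) 1 using 1
    ext z
    simp only [Set.mem_ofPred_eq, mem_sphere_zero_iff_norm, sub_eq_zero]
    constructor
    · intro h; nlinarith [norm_nonneg z]
    · intro h; rw [h]; norm_num
  · rw [himg (fun x => x ≤ 0)]
    refine IsCompact.image ?_ h1.continuous
    convert isCompact_closedBall (0:ℂ) 1 using 1
    ext z
    simp
  · intro w hw h0
    have hd : HasFDerivAt (fun w => ‖H.symm w‖^2 - 1) (0 : ℂ →L[ℝ] ℝ) w := by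
      rw [← h0]
      exact (((hsymm.norm_sq ℝ).sub contDiff_const).differentiable (by norm_num) w).hasFDerivAt
    have hΦd : HasFDerivAt Φ (fderiv ℝ Φ (H.symm w)) (H.symm w) :=
      (h1.differentiable (by norm_num) _).hasFDerivAt
    have hw' : w = Φ (H.symm w) := by rw [← hHΦ]; simp
    rw [hw'] at hd
    have hc := hd.comp (H.symm w) hΦd
    have hc2 : HasFDerivAt (fun z : ℂ => ‖z‖^2 - 1) (0 : ℂ →L[ℝ] ℝ) (H.symm w) := by
      have e1 : (fun w => ‖H.symm w‖ ^ 2 - 1) ∘ Φ = fun z : ℂ => ‖z‖^2 - 1 := by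
        ext z
        have : H.symm (Φ z) = z := by rw [← hHΦ]; simp
        simp [this]
      rw [e1, ContinuousLinearMap.zero_comp] at hc
      exact hc
    have hc3 := (hasStrictFDerivAt_norm_sq (H.symm w)).hasFDerivAt.sub_const 1
    have := hc2.unique hc3
    have := congrArg (fun L => L (H.symm w)) this
    simp at this
    simp [this] at hw

lemma qd_taylor (r : ℂ → ℝ) (hr : ContDiff ℝ 1 r) (S : Set ℂ) (hS : IsCompact S) (ε : ℝ) (hε : 0 < ε) :
    ∃ h > 0, ∀ b ∈ S, ∀ v : ℂ, ‖v‖ ≤ h → |r (b + v) - r b - fderiv ℝ r b v| ≤ ε * ‖v‖ := by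
  have hc : Continuous (fderiv ℝ r) := hr.continuous_fderiv (by norm_num)
  have := hS.uniformContinuousAt_of_continuousAt (fderiv ℝ r) (fun a _ => hc.continuousAt)
    (Metric.dist_mem_uniformity hε)
  obtain ⟨δ, hδ, hd⟩ := Metric.mem_uniformity_dist.1 this
  refine ⟨δ/2, by positivity, fun b hb v hv => ?_⟩
  have key : ∀ y ∈ ball b δ, ‖fderiv ℝ r y - fderiv ℝ r b‖ ≤ ε := by
    intro y hy
    have := hd (a := b) (b := y) (by rw [dist_comm]; exact hy) hb
    simp only [Set.mem_ofPred_eq] at this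
    rw [← dist_eq_norm, dist_comm]; exact this.le
  have := (convex_ball b δ).norm_image_sub_le_of_norm_fderiv_le' (𝕜 := ℝ) (f := r)
    (fun y _ => hr.differentiable (by norm_num) y) key (mem_ball_self hδ)
    (y := b + v) (by simp; linarith)
  simpa using this

lemma qd_cone (r : ℂ → ℝ) (hr : ContDiff ℝ 1 r) (hS : IsCompact {w | r w = 0}) (hne : ∃ w, r w = 0)
    (hd : ∀ w, r w = 0 → fderiv ℝ r w ≠ 0) (κ : ℝ) (hκ : 0 < κ) (hκ1 : κ ≤ 1) :
    ∃ n : ℂ → ℂ, ContinuousOn n {w | r w = 0} ∧ (∀ b, r b = 0 → ‖n b‖ = 1) ∧ ∃ h > 0,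
      (∀ b, r b = 0 → ∀ v, ‖v‖ ≤ h → v ≠ 0 → κ * ‖v‖ ≤ (v * (starRingEnd ℂ) (n b)).re →
        r (b + v) < 0 ∧ 0 < r (b - v)) ∧
      (∀ w, r w < 0 → ∃ b, r b = 0 ∧ (∀ b', r b' = 0 → ‖w - b‖ ≤ ‖w - b'‖) ∧
        (‖w - b‖ ≤ h → w = b + ‖w - b‖ * n b)) := by
  set S := {w | r w = 0} with hSdef
  have hmem : ∀ w, w ∈ S ↔ r w = 0 := fun w => Iff.rfl
  set G : ℂ → ℂ := fun b => (fderiv ℝ r b 1 : ℝ) + (fderiv ℝ r b Complex.I : ℝ) * Complex.I with hG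
  have hGL : ∀ b v, fderiv ℝ r b v = (v * (starRingEnd ℂ) (G b)).re := by
    intro b v
    have : v = v.re • (1:ℂ) + v.im • Complex.I := by
      simp
    conv_lhs => rw [this, map_add, map_smul, map_smul]
    simp [hG]
  have hGc : Continuous G := by
    have hc : Continuous (fderiv ℝ r) := hr.continuous_fderiv (by norm_num)
    simp only [hG]
    fun_prop
  have hG0 : ∀ b ∈ S, G b ≠ 0 := by
    intro b hb h
    apply hd b hb
    ext v
    rw [hGL, h]; simp
  obtain ⟨b0, hb0, hmin⟩ := hS.exists_isMinOn hne hGc.norm.continuousOn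
  set m := ‖G b0‖ with hm
  have hmpos : 0 < m := norm_pos_iff.2 (hG0 b0 hb0)
  have hmle : ∀ b ∈ S, m ≤ ‖G b‖ := fun b hb => hmin hb
  set n : ℂ → ℂ := fun b => - G b / ‖G b‖ with hn
  have hn1 : ∀ b ∈ S, ‖n b‖ = 1 := by
    intro b hb
    have : ‖G b‖ ≠ 0 := norm_ne_zero_iff.2 (hG0 b hb)
    simp [hn, this]
  have hGn : ∀ b ∈ S, G b = - (‖G b‖ * n b) := by
    intro b hb
    have : (‖G b‖ : ℂ) ≠ 0 := by exact_mod_cast norm_ne_zero_iff.2 (hG0 b hb)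
    simp only [hn]; field_simp
  have hLn : ∀ b ∈ S, ∀ v, fderiv ℝ r b v = - (‖G b‖ * (v * (starRingEnd ℂ) (n b)).re) := by
    intro b hb v
    rw [hGL, hGn b hb]
    have := hn1 b hb
    simp [this]
    ring
  obtain ⟨h, hh, htay⟩ := qd_taylor r hr S hS (m * κ / 2) (by positivity)
  have hcone : (∀ b, r b = 0 → ∀ v, ‖v‖ ≤ h → v ≠ 0 → κ * ‖v‖ ≤ (v * (starRingEnd ℂ) (n b)).re →
        r (b + v) < 0 ∧ 0 < r (b - v)) := by
    intro b hb v hv hv0 hk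
    have h1 := htay b hb v hv
    have h2 := htay b hb (-v) (by rwa [norm_neg])
    rw [map_neg, norm_neg, ← sub_eq_add_neg] at h2
    rw [hLn b hb, hb] at h1 h2
    have hvp := norm_pos_iff.2 hv0
    have h3 : m * (κ * ‖v‖) ≤ ‖G b‖ * (v * (starRingEnd ℂ) (n b)).re :=
      mul_le_mul (hmle b hb) hk (by positivity) (norm_nonneg _)
    have h4 : 0 < m * (κ * ‖v‖) := by positivity
    rw [abs_le] at h1 h2
    constructor <;> nlinarith
  refine ⟨n, ?_, hn1, h, hh, hcone, ?_⟩
  · refine ContinuousOn.div hGc.neg.continuousOn (by fun_prop) ?_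
    intro b hb
    exact_mod_cast norm_ne_zero_iff.2 (hG0 b hb)
  · intro w hw
    obtain ⟨b, hb, hbmin⟩ := hS.exists_isMinOn hne (f := fun b => ‖w - b‖) (by fun_prop)
    refine ⟨b, hb, fun b' hb' => hbmin hb', fun hle => ?_⟩
    have hwb : w - b ≠ 0 := by
      intro h0
      rw [sub_eq_zero] at h0
      rw [h0] at hw; rw [hmem] at hb; linarith
    have hext : IsLocalExtrOn (fun x => ‖x - w‖^2) {x | r x = r b} b := by
      left
      rw [(hmem b).1 hb]
      filter_upwards [self_mem_nhdsWithin] with x hx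
      have := hbmin hx
      simp only [Set.mem_ofPred_eq] at this
      rw [norm_sub_rev b, norm_sub_rev x]
      gcongr
    have hf' : HasStrictFDerivAt (fun x : ℂ => ‖x - w‖^2) (2 • (innerSL ℝ (b - w))) b := by
      have h1 := (hasStrictFDerivAt_norm_sq (b - w))
      have h2 : HasStrictFDerivAt (fun x : ℂ => x - w) (ContinuousLinearMap.id ℝ ℂ) b :=
        (hasStrictFDerivAt_id b).sub_const w
      have := h1.comp b h2
      simpa using this
    obtain ⟨c, a, hac, heq⟩ := hext.exists_multipliers_of_hasStrictFDerivAt_1d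
      (hr.contDiffAt.hasStrictFDerivAt (by norm_num)) hf'
    have hLv : ∀ v, a * (2 * ((w - b) * (starRingEnd ℂ) v).re) + c * (‖G b‖ * (v * (starRingEnd ℂ) (n b)).re) = 0 := by
      intro v
      have := congrArg (fun L => L v) heq
      simp [hLn b hb v] at this
      simp
      nlinarith
    have hGb : 0 < ‖G b‖ := norm_pos_iff.2 (hG0 b hb)
    have ha : a ≠ 0 := by
      intro ha
      have h1 := hLv (n b)
      rw [ha, Complex.mul_conj, Complex.normSq_eq_norm_sq, hn1 b hb] at h1
      simp at h1
      rcases h1 with h1 | h1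
      · exact hac (by simp [ha, h1])
      · exact hG0 b hb h1
    -- w - b = t n
    have ht : ∃ t : ℝ, w - b = t * n b := by
      obtain ⟨t, ht⟩ : ∃ t : ℝ, 2 * a * t = - c * ‖G b‖ := ⟨- c * ‖G b‖ / (2 * a), by field_simp⟩
      refine ⟨t, ?_⟩
      have h1 := hLv 1
      have h2 := hLv Complex.I
      simp at h1 h2
      apply Complex.ext
      · simp
        apply mul_left_cancel₀ (mul_ne_zero two_ne_zero ha)
        linear_combination h1 - (n b).re * ht
      · simp
        apply mul_left_cancel₀ (mul_ne_zero two_ne_zero ha)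
        linear_combination h2 - (n b).im * ht
    obtain ⟨t, ht⟩ := ht
    have hnt : ‖w - b‖ = |t| := by rw [ht]; simp [hn1 b hb]
    rcases le_or_gt 0 t with h0 | h0
    · rw [hnt, abs_of_nonneg h0, ← ht]; ring
    · exfalso
      have hv : -(w - b) ≠ 0 := neg_ne_zero.2 hwb
      have := (hcone b hb (-(w-b)) (by rwa [norm_neg]) hv (by
        have e : (n b).re * (n b).re + (n b).im * (n b).im = 1 := by
          have := Complex.normSq_eq_norm_sq (n b)
          rw [hn1 b hb, Complex.normSq_apply] at this; linarith
        rw [norm_neg, hnt, ht, abs_of_neg h0]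
        have : (-(↑t * n b) * (starRingEnd ℂ) (n b)).re = -t * ((n b).re * (n b).re + (n b).im * (n b).im) := by
          simp; ring
        rw [this, e]
        nlinarith)).2
      rw [sub_neg_eq_add, add_sub_cancel] at this
      linarith

lemma qd_pick_id (a F : ℂ) : ‖1 - (starRingEnd ℂ) a * F‖^2 - ‖F - a‖^2 = (1 - ‖a‖^2) * (1 - ‖F‖^2) := by
  simp only [← Complex.normSq_eq_norm_sq, Complex.normSq_apply]
  simp
  ring

lemma qd_pick (F : ℂ → ℂ) (hF : DifferentiableOn ℂ F (ball 0 1)) (hm : Set.MapsTo F (ball 0 1) (ball 0 1))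
    (ρ : ℝ) (hρ : ρ < 1) (h0 : ‖F 0‖ ≤ ρ) (ζ : ℂ) (hζ : ζ ∈ ball (0:ℂ) 1) :
    (1 - ρ)^2 / 2 * (1 - ‖ζ‖) ≤ 1 - ‖F ζ‖ := by
  set a := F 0 with ha
  have hden : ∀ x ∈ ball (0:ℂ) 1, 1 - ‖a‖ ≤ ‖1 - (starRingEnd ℂ) a * F x‖ := by
    intro x hx
    have h1 : ‖F x‖ < 1 := by simpa using hm hx
    have h2 := norm_sub_norm_le (1:ℂ) ((starRingEnd ℂ) a * F x)
    rw [norm_mul, RCLike.norm_conj, norm_one] at h2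
    nlinarith [norm_nonneg a]
  have hden0 : ∀ x ∈ ball (0:ℂ) 1, 1 - (starRingEnd ℂ) a * F x ≠ 0 := by
    intro x hx h
    have := hden x hx
    rw [h, norm_zero] at this; linarith
  have ha1 : ‖a‖ < 1 := by linarith
  set G : ℂ → ℂ := fun x => (F x - a) / (1 - (starRingEnd ℂ) a * F x) with hG
  have hGd : DifferentiableOn ℂ G (ball 0 1) := by
    refine DifferentiableOn.div (hF.sub_const _) ?_ hden0
    exact (differentiableOn_const _).sub (hF.const_mul _)
  have hGm : Set.MapsTo G (ball 0 1) (ball 0 1) := by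
    intro x hx
    have h1 : ‖F x‖ < 1 := by simpa using hm hx
    have h2 := qd_pick_id a (F x)
    have h3 := norm_pos_iff.2 (hden0 x hx)
    simp only [hG, mem_ball_zero_iff, norm_div]
    rw [div_lt_one h3]
    have : 0 < (1 - ‖a‖^2) * (1 - ‖F x‖^2) := by
      apply mul_pos <;> nlinarith [norm_nonneg a, norm_nonneg (F x)]
    nlinarith [norm_nonneg (F x - a)]
  have hle := Complex.norm_le_norm_of_mapsTo_ball hGd (hGm.mono_right ball_subset_closedBall) (by simp [hG, ha]) (by simpa using hζ)
  have hz : ‖ζ‖ < 1 := by simpa using hζ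
  have h2 := qd_pick_id a (F ζ)
  have h3 := norm_pos_iff.2 (hden0 ζ hζ)
  have h4 := hden ζ hζ
  have hFz : ‖F ζ‖ < 1 := by simpa using hm hζ
  simp only [hG, norm_div] at hle
  rw [div_le_iff₀ h3] at hle
  set N := ‖1 - (starRingEnd ℂ) a * F ζ‖
  have h5 : ‖F ζ - a‖^2 ≤ ‖ζ‖^2 * N^2 := by
    rw [← mul_pow]; gcongr
  have h6 : (1 - ρ)^2 ≤ N^2 := by
    apply pow_le_pow_left₀ <;> linarith
  have h7 : (1 - ρ)^2 * (1 - ‖ζ‖^2) ≤ N^2 * (1 - ‖ζ‖^2) := by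
    apply mul_le_mul_of_nonneg_right h6; nlinarith [norm_nonneg ζ]
  have h8 : (1 - ‖a‖^2) * (1 - ‖F ζ‖^2) ≤ 1 - ‖F ζ‖^2 := by
    have : 0 ≤ 1 - ‖F ζ‖^2 := by nlinarith [norm_nonneg (F ζ)]
    nlinarith [sq_nonneg ‖a‖]
  have h9 : (1 - ρ)^2 * (1 - ‖ζ‖) ≤ (1 - ρ)^2 * (1 - ‖ζ‖^2) := by
    apply mul_le_mul_of_nonneg_left _ (sq_nonneg _); nlinarith [norm_nonneg ζ]
  nlinarith [norm_nonneg (F ζ)]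

lemma qd_rhp (u : ℂ → ℂ) (hu : DifferentiableOn ℂ u (ball 0 1)) (hp : ∀ z ∈ ball (0:ℂ) 1, 0 < (u z).re)
    (z : ℂ) (hz : z ∈ ball (0:ℂ) 1) : ‖deriv u z‖ * (1 - ‖z‖) ≤ 2 * ‖u z‖ := by
  set a := u z with ha
  have hz1 : ‖z‖ < 1 := by simpa using hz
  have hsub : ball z (1 - ‖z‖) ⊆ ball 0 1 := by
    intro x hx
    rw [mem_ball_iff_norm] at hx
    have := norm_sub_norm_le x z
    simp; linarith
  have hne : ∀ x ∈ ball (0:ℂ) 1, u x + (starRingEnd ℂ) a ≠ 0 := by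
    intro x hx h
    have := congrArg Complex.re h
    simp at this
    have h1 := hp x hx
    have h2 := hp z hz
    linarith
  set G : ℂ → ℂ := fun x => (u x - a) / (u x + (starRingEnd ℂ) a) with hG
  have hud : HasDerivAt u (deriv u z) z := (hu.differentiableAt (isOpen_ball.mem_nhds hz)).hasDerivAt
  have hGd : DifferentiableOn ℂ G (ball z (1 - ‖z‖)) := by
    refine (DifferentiableOn.div (hu.sub_const _) (hu.add_const _) hne).mono hsub
  have hGz : G z = 0 := by simp [hG, ha]
  have hGm : Set.MapsTo G (ball z (1 - ‖z‖)) (closedBall (G z) 1) := by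
    intro x hx
    rw [hGz, mem_closedBall_zero_iff]
    simp only [hG, norm_div]
    rw [div_le_one (norm_pos_iff.2 (hne x (hsub hx)))]
    rw [← sq_le_sq₀ (norm_nonneg _) (norm_nonneg _)]
    simp only [← Complex.normSq_eq_norm_sq, Complex.normSq_apply]
    simp
    nlinarith [mul_pos (hp x (hsub hx)) (hp z hz)]
  have h1 := Complex.norm_deriv_le_div_of_mapsTo_ball hGd hGm (by linarith)
  have h2 : deriv G z = deriv u z / (2 * a.re : ℝ) := by
    have := ((hud.sub_const a).div (hud.add_const ((starRingEnd ℂ) a)) (hne z hz)).deriv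
    rw [show deriv G z = _ from this]
    have e : u z + (starRingEnd ℂ) a = (2 * a.re : ℝ) := by
      rw [← ha, Complex.add_conj]
    have e0 : ((2 * a.re : ℝ) : ℂ) ≠ 0 := by rw [← e]; exact hne z hz
    rw [e, ← ha, sub_self, zero_mul, sub_zero]
    field_simp
  have h3 := hp z hz
  rw [h2, norm_div, Complex.norm_real, Real.norm_of_nonneg (by linarith), div_le_div_iff₀ (by linarith) (by linarith)] at h1
  have := Complex.re_le_norm a
  linarith

lemma qd_koebe (φ : ℂ → ℂ) (hφ : DifferentiableOn ℂ φ (ball 0 1)) (b b' : ℂ)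
    (hseg : ∀ z ∈ ball (0:ℂ) 1, ∀ t : ℝ, 0 ≤ t → t ≤ 1 → φ z ≠ b + t * (b' - b))
    (z : ℂ) (hz : z ∈ ball (0:ℂ) 1) :
    ‖deriv φ z‖ * (1 - ‖z‖) * ‖b - b'‖ ≤ 4 * (‖φ z - b‖ * ‖φ z - b'‖) := by
  have hb : ∀ x ∈ ball (0:ℂ) 1, φ x - b ≠ 0 := fun x hx h => hseg x hx 0 le_rfl zero_le_one (by
    simp; exact sub_eq_zero.1 h)
  have hb' : ∀ x ∈ ball (0:ℂ) 1, φ x - b' ≠ 0 := fun x hx h => hseg x hx 1 zero_le_one le_rfl (by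
    simp; exact sub_eq_zero.1 h)
  set q : ℂ → ℂ := fun x => (φ x - b) / (φ x - b') with hq
  have hqs : ∀ x ∈ ball (0:ℂ) 1, q x ∈ Complex.slitPlane := by
    intro x hx
    by_contra hc
    rw [Complex.mem_slitPlane_iff_not_le_zero, not_not] at hc
    have him : (q x).im = 0 := (Complex.le_def.1 hc).2
    have hre : (q x).re ≤ 0 := (Complex.le_def.1 hc).1
    set y := -(q x).re with hy
    have hqy : q x = -(y : ℂ) := by
      apply Complex.ext <;> simp [hy, him]
    have hy0 : 0 ≤ y := by linarith
    have h1 : φ x - b = -(y:ℂ) * (φ x - b') := by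
      rw [← hqy]; simp only [hq]; field_simp [hb' x hx]
    apply hseg x hx (y / (1 + y)) (by positivity) (by rw [div_le_one (by positivity)]; linarith)
    have h2 : (1 + y : ℂ) ≠ 0 := by exact_mod_cast (by positivity : (1 + y) ≠ 0)
    push_cast
    field_simp
    linear_combination h1
  have hφd : HasDerivAt φ (deriv φ z) z := (hφ.differentiableAt (isOpen_ball.mem_nhds hz)).hasDerivAt
  have hqd : DifferentiableOn ℂ q (ball 0 1) := (hφ.sub_const _).div (hφ.sub_const _) hb'
  have hqz : HasDerivAt q (deriv φ z * (b - b') / (φ z - b')^2) z := by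
    have e : deriv φ z * (b - b') / (φ z - b')^2 =
      (deriv φ z * (φ z - b') - (φ z - b) * deriv φ z) / (φ z - b')^2 := by ring
    rw [e]
    exact (hφd.sub_const b).div (hφd.sub_const b') (hb' z hz)
  set u : ℂ → ℂ := fun x => Complex.exp (Complex.log (q x) / 2) with hu
  have hud : DifferentiableOn ℂ u (ball 0 1) := by
    exact ((hqd.clog hqs).div_const 2).cexp
  have hup : ∀ x ∈ ball (0:ℂ) 1, 0 < (u x).re := by
    intro x hx
    have h1 := (Complex.mem_slitPlane_iff_arg.1 (hqs x hx)).1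
    have h2 := Complex.neg_pi_lt_arg (q x)
    have h3 := Complex.arg_le_pi (q x)
    simp only [hu, Complex.exp_re]
    apply mul_pos (Real.exp_pos _)
    have : (Complex.log (q x) / 2).im = Complex.arg (q x) / 2 := by
      simp [Complex.log_im]
    rw [this]
    apply Real.cos_pos_of_mem_Ioo
    constructor
    · linarith
    · have := lt_of_le_of_ne h3 h1
      linarith
  have h1 := qd_rhp u hud hup z hz
  have hqne : q z ≠ 0 := div_ne_zero (hb z hz) (hb' z hz)
  have huz := (((hqz.clog (hqs z hz)).div_const 2).cexp).deriv
  rw [show deriv u z = _ from huz] at h1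
  have hu0 : 0 < ‖u z‖ := by simp [hu]
  rw [norm_mul] at h1
  have h2 : ‖deriv φ z * (b - b') / (φ z - b')^2 / q z / 2‖ * (1 - ‖z‖) ≤ 2 := by
    rw [show Complex.exp (Complex.log (q z) / 2) = u z from rfl] at h1
    apply le_of_mul_le_mul_left _ hu0
    linarith
  have hB := norm_pos_iff.2 (hb z hz)
  have hB' := norm_pos_iff.2 (hb' z hz)
  simp only [hq, norm_div, norm_mul, norm_pow] at h2
  have e : ‖deriv φ z‖ * ‖b - b'‖ / ‖φ z - b'‖ ^ 2 / (‖φ z - b‖ / ‖φ z - b'‖) / ‖(2:ℂ)‖ * (1 - ‖z‖)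
    = ‖deriv φ z‖ * (1 - ‖z‖) * ‖b - b'‖ / (2 * (‖φ z - b‖ * ‖φ z - b'‖)) := by
    simp; field_simp
  rw [e, div_le_iff₀ (by positivity)] at h2
  linarith

lemma qd_chi (γ : ℝ) (hγ0 : 0 < γ) (hγ1 : γ < 1) (ζ : ℂ) (hζ : ζ ∈ ball (0:ℂ) 1) :
    Real.cos (γ * (π / 2)) * ‖(1 - ζ) ^ (γ : ℂ)‖ ≤ ((1 - ζ) ^ (γ : ℂ)).re ∧
    ‖(1 - ζ) ^ (γ : ℂ)‖ ≤ 2 ∧ (1 - ζ) ^ (γ : ℂ) ≠ 0 ∧ 1 - ζ ∈ Complex.slitPlane := by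
  have hz : ‖ζ‖ < 1 := by simpa using hζ
  have hre : 0 < (1 - ζ).re := by
    have := Complex.re_le_norm ζ
    simp; linarith
  have hne : 1 - ζ ≠ 0 := by intro h; rw [h] at hre; simp at hre
  have harg : |Complex.arg (1 - ζ)| < π / 2 := Complex.abs_arg_lt_pi_div_two_iff.2 (Or.inl hre)
  refine ⟨?_, ?_, ?_, Or.inl hre⟩
  · rw [Complex.cpow_def_of_ne_zero hne, Complex.norm_exp, Complex.exp_re, mul_comm]
    gcongr
    have him : (Complex.log (1 - ζ) * γ).im = γ * Complex.arg (1 - ζ) := by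
      simp [Complex.log_im]; ring
    rw [him, ← Real.cos_abs (γ * Complex.arg (1 - ζ)), abs_mul, abs_of_pos hγ0]
    apply Real.cos_le_cos_of_nonneg_of_le_pi
    · positivity
    · nlinarith [Real.pi_pos]
    · gcongr
  · rw [Complex.norm_cpow_real]
    have h1 : ‖1 - ζ‖ ≤ 2 := by
      have := norm_sub_le 1 ζ
      rw [norm_one] at this; linarith
    calc ‖1 - ζ‖ ^ γ ≤ 2 ^ γ := by gcongr
      _ ≤ 2 ^ (1:ℝ) := by apply Real.rpow_le_rpow_of_exponent_le <;> linarith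
      _ = 2 := by norm_num
  · simp [Complex.cpow_eq_zero_iff, hne]

lemma qd_growth (r : ℂ → ℝ) (hr : ContDiff ℝ 1 r) (hS : IsCompact {w | r w = 0})
    (hS2 : IsCompact {w | r w ≤ 0}) (hne : ∃ w, r w = 0)
    (hd : ∀ w, r w = 0 → fderiv ℝ r w ≠ 0) (φ : ℂ → ℂ)
    (hφd : DifferentiableOn ℂ φ (Metric.ball 0 1))
    (hφi : Set.InjOn φ (Metric.ball 0 1)) (hφim : φ '' Metric.ball 0 1 = {w | r w < 0})
    (γ : ℝ) (hγ0 : 0 < γ) (hγ1 : γ < 1) :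
    ∃ C, 0 ≤ C ∧ ∀ z ∈ ball (0:ℂ) 1, ‖deriv φ z‖ ≤ C * (1 - ‖z‖) ^ (γ - 1) := by
  obtain ⟨ψ, hψ, hψd, -⟩ := qd_inv_holo φ hφd hφi
  rw [hφim] at hψd
  have hcos : 0 < Real.cos (γ * (π / 2)) := by
    apply Real.cos_pos_of_mem_Ioo
    constructor <;> nlinarith [Real.pi_pos]
  obtain ⟨n, hnc, hn1, h, hh, hcone, hnear⟩ :=
    qd_cone r hr hS hne hd (Real.cos (γ * (π / 2))) hcos (Real.cos_le_one _)
  have hφr : ∀ z ∈ ball (0:ℂ) 1, r (φ z) < 0 := by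
    intro z hz
    have : φ z ∈ φ '' ball 0 1 := ⟨z, hz, rfl⟩
    rw [hφim] at this; exact this
  have hψm : ∀ w, r w < 0 → ψ w ∈ ball (0:ℂ) 1 ∧ φ (ψ w) = w := by
    intro w hw
    have : w ∈ φ '' ball 0 1 := by rw [hφim]; exact hw
    obtain ⟨z, hz, rfl⟩ := this
    rw [hψ z hz]; exact ⟨hz, rfl⟩
  set s := h / 2 with hs
  have hspos : 0 < s := by positivity
  have hnn : ∀ b, r b = 0 → n b * (starRingEnd ℂ) (n b) = 1 := by
    intro b hb
    rw [Complex.mul_conj, Complex.normSq_eq_norm_sq, hn1 b hb]; simp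
  -- compactness bound
  have hcpt : ∀ A : Set ℂ, IsCompact A → (∀ w ∈ A, r w < 0) → ∃ ρ, 0 ≤ ρ ∧ ρ < 1 ∧ ∀ w ∈ A, ‖ψ w‖ ≤ ρ := by
    intro A hA hAr
    have hc : ContinuousOn (fun w => ‖ψ w‖) A := (hψd.continuousOn.mono hAr).norm
    rcases A.eq_empty_or_nonempty with rfl | hne
    · exact ⟨0, le_rfl, by norm_num, by simp⟩
    · obtain ⟨a, ha, hmax⟩ := hA.exists_isMaxOn hne hc
      exact ⟨‖ψ a‖, norm_nonneg _, by simpa using (hψm a (hAr a ha)).1, fun w hw => hmax hw⟩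
  -- chi maps into Ω
  have hchi : ∀ b, r b = 0 → ∀ ζ ∈ ball (0:ℂ) 1, r (b + s * n b * (1 - ζ) ^ (γ : ℂ)) < 0 := by
    intro b hb ζ hζ
    obtain ⟨h1, h2, h3, -⟩ := qd_chi γ hγ0 hγ1 ζ hζ
    have hnb : n b ≠ 0 := by
      intro h0; have := hn1 b hb; rw [h0, norm_zero] at this; norm_num at this
    have hnorm : ‖(s:ℂ) * n b * (1 - ζ) ^ (γ : ℂ)‖ = s * ‖(1 - ζ) ^ (γ : ℂ)‖ := by
      rw [norm_mul, norm_mul, hn1 b hb, Complex.norm_real, Real.norm_of_nonneg hspos.le, mul_one]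
    refine (hcone b hb (s * n b * (1 - ζ) ^ (γ : ℂ)) ?_ ?_ ?_).1
    · rw [hnorm]; nlinarith
    · refine mul_ne_zero (mul_ne_zero ?_ hnb) h3
      exact_mod_cast hspos.ne'
    · rw [hnorm]
      have : (s:ℂ) * n b * (1 - ζ) ^ (γ : ℂ) * (starRingEnd ℂ) (n b) = s * (1 - ζ) ^ (γ : ℂ) := by
        linear_combination (s * (1 - ζ) ^ (γ : ℂ)) * hnn b hb
      rw [this, Complex.re_ofReal_mul]
      nlinarith
  obtain ⟨ρ, hρ0, hρ1, hρ⟩ := hcpt ((fun b => b + s * n b) '' {w | r w = 0})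
    (hS.image_of_continuousOn (by fun_prop)) (by
      rintro _ ⟨b, hb, rfl⟩
      have := hchi b hb 0 (by simp)
      simpa using this)
  -- distance far away
  have hA : IsCompact ({w | r w ≤ 0} ∩ {w | ∀ b, r b = 0 → s ≤ ‖w - b‖}) := by
    apply hS2.inter_right
    have : {w | ∀ b, r b = 0 → s ≤ ‖w - b‖} = ⋂ b, ⋂ (_ : r b = 0), {w | s ≤ ‖w - b‖} := by
      ext w; simp
    rw [this]
    refine isClosed_iInter fun b => isClosed_iInter fun _ => ?_
    exact isClosed_le continuous_const (by fun_prop)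
  obtain ⟨ρ', hρ'0, hρ'1, hρ'⟩ := hcpt _ hA (by
    rintro w ⟨hw1, hw2⟩
    rcases lt_or_eq_of_le (show r w ≤ 0 from hw1) with h0 | h0
    · exact h0
    · have := hw2 w h0
      simp at this; linarith)
  obtain ⟨M, hM⟩ := hS2.isBounded.exists_norm_le
  obtain ⟨b0, hb0⟩ := hne
  have hM0 : 0 ≤ M := (norm_nonneg _).trans (hM b0 (show r b0 ≤ 0 from hb0.le))
  -- main distance estimate
  set c := (1 - ρ)^2 / 2 with hc
  have hcpos : 0 < c := by have : 0 < 1 - ρ := by linarith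
                           positivity
  set D := max (s / c ^ γ) (2 * M / (1 - ρ') ^ γ) with hD
  have hdist : ∀ z ∈ ball (0:ℂ) 1, ∀ b, r b = 0 → (∀ b', r b' = 0 → ‖φ z - b‖ ≤ ‖φ z - b'‖) →
        (‖φ z - b‖ ≤ h → φ z = b + ‖φ z - b‖ * n b) → ‖φ z - b‖ ≤ D * (1 - ‖z‖) ^ γ := by
    intro z hz b hb hmin himp
    have hz1 : ‖z‖ < 1 := by simpa using hz
    rcases lt_or_ge ‖φ z - b‖ s with hlt | hge
    · have hw := himp (by linarith)
      set d := ‖φ z - b‖ with hdd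
      have hdpos : 0 < d := by
        apply norm_pos_iff.2
        intro h0
        have := hφr z hz
        rw [sub_eq_zero.1 h0, hb] at this; linarith
      set F : ℂ → ℂ := fun ζ => ψ (b + s * n b * (1 - ζ) ^ (γ : ℂ)) with hF
      have hFd : DifferentiableOn ℂ F (ball 0 1) := by
        refine hψd.comp ?_ (fun ζ hζ => hchi b hb ζ hζ)
        intro ζ hζ
        have := (qd_chi γ hγ0 hγ1 ζ hζ).2.2.2
        apply DifferentiableAt.differentiableWithinAt
        refine (DifferentiableAt.const_mul ?_ _).const_add _
        exact ((differentiableAt_const _).sub differentiableAt_id).cpow_const this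
      have hFm : Set.MapsTo F (ball 0 1) (ball 0 1) := fun ζ hζ => (hψm _ (hchi b hb ζ hζ)).1
      have hF0 : ‖F 0‖ ≤ ρ := by
        have := hρ (b + s * n b) ⟨b, hb, rfl⟩
        simpa [hF] using this
      set τ := d / s with hτ
      have hτ0 : 0 < τ := by positivity
      have hτ1 : τ < 1 := by rw [hτ, div_lt_one hspos]; exact hlt
      set x := τ ^ (1/γ) with hx
      have hx0 : 0 < x := by positivity
      have hx1 : x < 1 := Real.rpow_lt_one hτ0.le hτ1 (by positivity)
      have hn' : ‖(1 - x : ℂ)‖ = 1 - x := by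
        rw [← Complex.ofReal_one, ← Complex.ofReal_sub, Complex.norm_real, Real.norm_of_nonneg (by linarith)]
      have hpk := qd_pick F hFd hFm ρ hρ1 hF0 (1 - x) (by simp [hn', hx0])
      have hxγ : x ^ γ = τ := by
        rw [hx, ← Real.rpow_mul hτ0.le]; field_simp; simp
      have hFx : F (1 - x) = z := by
        simp only [hF]
        rw [sub_sub_cancel, ← Complex.ofReal_cpow hx0.le, hxγ]
        have : b + (s:ℂ) * n b * (τ : ℝ) = φ z := by
          rw [hw, hτ]
          have : (s:ℂ) ≠ 0 := by exact_mod_cast hspos.ne'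
          push_cast; field_simp
        rw [this, hψ z hz]
      rw [hFx, hn', sub_sub_cancel] at hpk
      have h3 : x ≤ (1 - ‖z‖) / c := by rw [le_div_iff₀ hcpos, mul_comm]; exact hpk
      have h4 : τ ≤ (1 - ‖z‖) ^ γ / c ^ γ := by
        rw [← hxγ, ← Real.div_rpow (by linarith) hcpos.le]
        gcongr
      have h5 : d = s * τ := by rw [hτ]; field_simp
      have hpw : 0 ≤ (1 - ‖z‖) ^ γ := Real.rpow_nonneg (by linarith) _
      calc d ≤ s * ((1 - ‖z‖) ^ γ / c ^ γ) := by rw [h5]; gcongr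
        _ = s / c ^ γ * (1 - ‖z‖) ^ γ := by ring
        _ ≤ D * (1 - ‖z‖) ^ γ := by gcongr; exact le_max_left _ _
    · have h1 := hρ' (φ z) ⟨(hφr z hz).le, fun b' hb' => hge.trans (hmin b' hb')⟩
      rw [hψ z hz] at h1
      have h2 : ‖φ z - b‖ ≤ 2 * M := by
        have := norm_sub_le (φ z) b
        have := hM (φ z) (hφr z hz).le
        have := hM b hb.le
        linarith
      have hp : 0 < (1 - ρ') ^ γ := Real.rpow_pos_of_pos (by linarith) _
      have h3 : (1 - ρ') ^ γ ≤ (1 - ‖z‖) ^ γ := Real.rpow_le_rpow (by linarith) (by linarith) hγ0.le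
      calc ‖φ z - b‖ ≤ 2 * M / (1 - ρ') ^ γ * (1 - ρ') ^ γ := by rw [div_mul_cancel₀ _ hp.ne']; exact h2
        _ ≤ D * (1 - ‖z‖) ^ γ := by gcongr; exact le_max_right _ _
  have hD0 : 0 ≤ D := le_max_of_le_left (by positivity)
  refine ⟨4 * (D * (2 * M + h)) / h, by positivity, fun z hz => ?_⟩
  have hz1 : ‖z‖ < 1 := by simpa using hz
  obtain ⟨b, hb, hmin, himp⟩ := hnear (φ z) (hφr z hz)
  have hdz := hdist z hz b hb hmin himp
  have hk := qd_koebe φ hφd b (b - h * n b) (by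
    intro x hx t ht0 ht1 heq
    have hneg := hφr x hx
    rw [heq] at hneg
    rcases eq_or_lt_of_le ht0 with h0 | h0
    · rw [← h0] at hneg; simp [hb] at hneg
    · have hth : 0 < t * h := by positivity
      have := (hcone b hb ((t * h : ℝ) * n b) (by
        rw [norm_mul, hn1 b hb, Complex.norm_real, Real.norm_of_nonneg hth.le]; nlinarith) (by
        refine mul_ne_zero (by exact_mod_cast hth.ne') ?_
        intro h0; have := hn1 b hb; rw [h0, norm_zero] at this; norm_num at this) (by
        rw [norm_mul, hn1 b hb, mul_assoc, hnn b hb, Complex.norm_real, Real.norm_of_nonneg hth.le, mul_one, mul_one, Complex.ofReal_re]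
        nlinarith [Real.cos_le_one (γ * (π/2))])).2
      have e : b + (t:ℂ) * (b - h * n b - b) = b - (t * h : ℝ) * n b := by push_cast; ring
      rw [e] at hneg
      linarith) z hz
  have hnb : ‖b - (b - h * n b)‖ = h := by
    rw [sub_sub_cancel, norm_mul, hn1 b hb, Complex.norm_real, Real.norm_of_nonneg hh.le, mul_one]
  have hb'' : ‖φ z - (b - h * n b)‖ ≤ 2 * M + h := by
    have h1 : ‖φ z - (b - h * n b)‖ ≤ ‖φ z - b‖ + ‖h * n b‖ := by
      rw [← sub_add]; exact norm_add_le _ _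
    have h2 : ‖(h:ℂ) * n b‖ = h := by
      rw [norm_mul, hn1 b hb, Complex.norm_real, Real.norm_of_nonneg hh.le, mul_one]
    have := norm_sub_le (φ z) b
    have := hM (φ z) (hφr z hz).le
    have := hM b hb.le
    linarith
  rw [hnb] at hk
  have hzp : 0 < 1 - ‖z‖ := by linarith
  have hpw : 0 ≤ (1 - ‖z‖) ^ γ := Real.rpow_nonneg hzp.le _
  rw [Real.rpow_sub_one hzp.ne']
  rw [← mul_div_assoc, le_div_iff₀ hzp, div_mul_eq_mul_div, le_div_iff₀ hh]
  calc _ ≤ _ := hk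
    _ ≤ 4 * (D * (1 - ‖z‖) ^ γ * (2 * M + h)) := by gcongr
    _ = _ := by ring

lemma qd_Q_fin (φ : ℂ → ℂ) (α : ℝ) (hα : 2 < α) (C : ℝ) (hC : 0 ≤ C)
    (h : ∀ z ∈ ball (0:ℂ) 1, ‖deriv φ z‖ ≤ C * (1 - ‖z‖) ^ ((1 - 1/(2*α)) - 1)) :
    ∫⁻ z in Metric.ball (0 : ℂ) 1, (‖deriv φ z‖₊ : ℝ≥0∞) ^ α < ∞ := by
  have hi : IntegrableOn (fun z : ℂ => C ^ α * (1 - ‖z‖) ^ (-(1/2) : ℝ)) (ball 0 1) := by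
    apply Integrable.const_mul
    rw [← IntegrableOn, integrableOn_fun_norm_addHaar volume (f := fun y => (1 - y) ^ (-(1/2) : ℝ))]
    have h1 : IntegrableOn (fun y : ℝ => (1 - y) ^ (-(1/2) : ℝ)) (Set.Ioo 0 1) := by
      have := (intervalIntegral.intervalIntegrable_rpow' (r := -(1/2)) (by norm_num) (a := 0) (b := 1)).comp_sub_left 1
      simp only [sub_zero, sub_self] at this
      exact ((intervalIntegrable_iff_integrableOn_Ioc_of_le zero_le_one).1 this.symm).mono_set Set.Ioo_subset_Ioc_self
    refine Integrable.mono' h1 ?_ ?_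
    · apply Measurable.aestronglyMeasurable
      fun_prop
    · filter_upwards [ae_restrict_mem measurableSet_Ioo] with y hy
      simp only [Complex.finrank_real_complex, smul_eq_mul, norm_mul, norm_pow]
      have : 0 ≤ (1 - y) ^ (-(1/2) : ℝ) := Real.rpow_nonneg (by linarith [hy.2]) _
      rw [Real.norm_of_nonneg this, Real.norm_of_nonneg hy.1.le]
      simp
      nlinarith [hy.1, hy.2]
  refine lt_of_le_of_lt ?_ hi.lintegral_lt_top
  refine setLIntegral_mono' measurableSet_ball fun z hz => ?_
  have hz1 : ‖z‖ < 1 := by simpa using hz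
  rw [← enorm_eq_nnnorm, ← ofReal_norm, ENNReal.ofReal_rpow_of_nonneg (norm_nonneg _) (by linarith)]
  apply ENNReal.ofReal_le_ofReal
  calc ‖deriv φ z‖ ^ α ≤ (C * (1 - ‖z‖) ^ ((1 - 1/(2*α)) - 1)) ^ α := by
        gcongr; exact h z hz
    _ = _ := by
      rw [Real.mul_rpow hC (Real.rpow_nonneg (by linarith) _), ← Real.rpow_mul (by linarith)]
      congr 2; field_simp; ring

lemma qd_kernel0 (s : ℝ) (hs0 : 0 < s) (hs2 : s < 2) :
    ∫⁻ y in ball (0:ℂ) 1, (‖y‖ₑ⁻¹) ^ s = ENNReal.ofReal (2 * π / (2 - s)) := by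
  have hint1 : IntegrableOn (fun y : ℝ => y ^ (1 - s)) (Set.Ioo 0 1) :=
    ((intervalIntegrable_iff_integrableOn_Ioc_of_le zero_le_one).1
      (intervalIntegral.intervalIntegrable_rpow' (by linarith))).mono_set Set.Ioo_subset_Ioc_self
  have hcongr : ∀ y ∈ Set.Ioo (0:ℝ) 1, y ^ (1 - s) = y ^ (Module.finrank ℝ ℂ - 1) • (y ^ (-s)) := by
    intro y hy
    simp [Complex.finrank_real_complex]
    rw [sub_eq_add_neg, Real.rpow_add hy.1, Real.rpow_one]
  have hi : IntegrableOn (fun z : ℂ => ‖z‖ ^ (-s)) (ball 0 1) := by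
    rw [integrableOn_fun_norm_addHaar volume (f := fun y => y ^ (-s))]
    exact hint1.congr_fun hcongr measurableSet_Ioo
  have hval : ∫ z in ball (0:ℂ) 1, ‖z‖ ^ (-s) = 2 * π / (2 - s) := by
    have h1 := integral_fun_norm_addHaar (volume : Measure ℂ) (Set.indicator (Set.Iio 1) (fun y : ℝ => y ^ (-s)))
    have h2 : (fun z : ℂ => Set.indicator (Set.Iio 1) (fun y : ℝ => y ^ (-s)) ‖z‖) =
        Set.indicator (ball 0 1) (fun z : ℂ => ‖z‖ ^ (-s)) := by
      ext z; simp [Set.indicator]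
    rw [h2, integral_indicator measurableSet_ball] at h1
    rw [h1]
    have h3 : ∫ y in Set.Ioi (0:ℝ), y ^ (Module.finrank ℝ ℂ - 1) • Set.indicator (Set.Iio 1) (fun y : ℝ => y ^ (-s)) y
        = ∫ y in Set.Ioo (0:ℝ) 1, y ^ (1 - s) := by
      rw [setIntegral_congr_fun measurableSet_Ioo hcongr, ← integral_indicator measurableSet_Ioo,
        ← integral_indicator measurableSet_Ioi]
      congr 1; ext y
      by_cases h0 : 0 < y <;> by_cases h1 : y < 1 <;> simp [Set.indicator, h0, h1]
    rw [h3, ← integral_Ioc_eq_integral_Ioo, ← intervalIntegral.integral_of_le zero_le_one,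
      integral_rpow (Or.inl (by linarith))]
    have h4 : (1 - s + 1) ≠ 0 := by linarith
    rw [Real.zero_rpow h4]
    simp [Complex.finrank_real_complex, Measure.real, Complex.volume_ball]
    rw [show 1 - s + 1 = 2 - s by ring]; ring
  rw [← hval, ofReal_integral_eq_lintegral_ofReal hi (Filter.Eventually.of_forall fun z => Real.rpow_nonneg (norm_nonneg _) _)]
  have hae : ∀ᵐ z : ℂ ∂(volume.restrict (ball 0 1)), z ≠ 0 := by
    apply ae_restrict_of_ae
    simp [ae_iff]
  refine lintegral_congr_ae ?_
  filter_upwards [hae] with z hz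
  have hz := norm_pos_iff.2 hz
  rw [← ofReal_norm, ← ENNReal.ofReal_inv_of_pos hz, ENNReal.ofReal_rpow_of_pos (inv_pos.2 hz),
    Real.inv_rpow hz.le, Real.rpow_neg hz.le]

lemma qd_kernel (s : ℝ) (hs0 : 0 < s) (hs2 : s < 2) (x : ℂ) :
    ∫⁻ y in ball (0:ℂ) 1, (‖x - y‖ₑ⁻¹) ^ s ≤ ENNReal.ofReal (2 * π / (2 - s)) := by
  rw [← qd_kernel0 s hs0 hs2]
  have htr : ∫⁻ y in ball (0:ℂ) 1, (‖y‖ₑ⁻¹) ^ s = ∫⁻ y in ball x 1, (‖x - y‖ₑ⁻¹) ^ s := by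
    rw [← lintegral_indicator measurableSet_ball, ← lintegral_indicator measurableSet_ball,
      ← lintegral_sub_left_eq_self _ x]
    congr 1; ext y
    simp [Set.indicator, dist_eq_norm, norm_sub_rev]
  rw [htr, ← lintegral_inter_add_sdiff (μ := volume) (f := fun y => (‖x - y‖ₑ⁻¹) ^ s) (ball 0 1) (measurableSet_ball : MeasurableSet (ball x 1)),
    ← lintegral_inter_add_sdiff (μ := volume) (f := fun y => (‖x - y‖ₑ⁻¹) ^ s) (ball x 1) (measurableSet_ball : MeasurableSet (ball (0:ℂ) 1)), Set.inter_comm (ball x 1)]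
  gcongr 1
  have hm : volume (ball (0:ℂ) 1 \ ball x 1) = volume (ball x 1 \ ball (0:ℂ) 1) := by
    have h1 := measure_inter_add_sdiff (μ := volume) (ball (0:ℂ) 1) (measurableSet_ball : MeasurableSet (ball x 1))
    have h2 := measure_inter_add_sdiff (μ := volume) (ball x 1) (measurableSet_ball : MeasurableSet (ball (0:ℂ) 1))
    have h3 : volume (ball (0:ℂ) 1) = volume (ball x 1) := by simp [Complex.volume_ball]
    rw [Set.inter_comm, ← h3, ← h1] at h2
    refine ((ENNReal.add_right_inj ?_).1 h2).symm
    exact ((measure_mono Set.inter_subset_left).trans_lt measure_ball_lt_top).ne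
  calc ∫⁻ y in ball (0:ℂ) 1 \ ball x 1, (‖x - y‖ₑ⁻¹) ^ s ≤ ∫⁻ y in ball (0:ℂ) 1 \ ball x 1, 1 := by
        refine setLIntegral_mono' (measurableSet_ball.diff measurableSet_ball) fun y hy => ?_
        have h1 : 1 ≤ ‖x - y‖ := by
          have := hy.2
          rw [mem_ball, not_lt, dist_comm, dist_eq_norm] at this; exact this
        apply ENNReal.rpow_le_one _ hs0.le
        rw [ENNReal.inv_le_one, ← ofReal_norm]
        exact ENNReal.one_le_ofReal.2 h1
    _ = ∫⁻ y in ball x 1 \ ball (0:ℂ) 1, 1 := by simp [hm]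
    _ ≤ _ := by
        refine setLIntegral_mono' (measurableSet_ball.diff measurableSet_ball) fun y hy => ?_
        have h1 : ‖x - y‖ ≤ 1 := by
          have := hy.1
          rw [mem_ball, dist_comm, dist_eq_norm] at this; exact this.le
        apply ENNReal.one_le_rpow _ hs0
        rw [ENNReal.one_le_inv, ← ofReal_norm]
        exact ENNReal.ofReal_le_one.2 h1

lemma qd_holder (α : ℝ) (hα : 2 < α) (A : ℝ≥0∞) (g w : ℂ → ℝ≥0∞) (hg : Measurable g) (hw : Measurable w)
    (hk : ∀ x : ℂ, ∫⁻ y in ball (0:ℂ) 1, (‖x - y‖ₑ⁻¹) ^ (α / (α - 1)) ≤ A) :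
    ∫⁻ x in ball (0:ℂ) 1, w x ^ (2:ℝ) * (∫⁻ y in ball (0:ℂ) 1, g y * ‖x - y‖ₑ⁻¹) ^ (2:ℝ)
      ≤ A ^ ((2 * α - 2) / α) * (∫⁻ x in ball (0:ℂ) 1, w x ^ α) ^ (2 / α) *
        ∫⁻ y in ball (0:ℂ) 1, g y ^ (2:ℝ) := by
  set s := α / (α - 1) with hs
  have hα1 : 0 < α - 1 := by linarith
  have hs0 : 0 < s := by positivity
  have hs2 : s < 2 := by rw [hs, div_lt_iff₀ hα1]; linarith
  have hkm : Measurable (fun p : ℂ × ℂ => ‖p.1 - p.2‖ₑ⁻¹) := by fun_prop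
  have hkx : ∀ x : ℂ, Measurable (fun y : ℂ => ‖x - y‖ₑ⁻¹) := by intro x; fun_prop
  have hky : ∀ y : ℂ, Measurable (fun x : ℂ => ‖x - y‖ₑ⁻¹) := by intro x; fun_prop
  -- Cauchy-Schwarz
  have hcs : ∀ x : ℂ, (∫⁻ y in ball (0:ℂ) 1, g y * ‖x - y‖ₑ⁻¹) ^ (2:ℝ) ≤
      A * ∫⁻ y in ball (0:ℂ) 1, g y ^ (2:ℝ) * (‖x - y‖ₑ⁻¹) ^ (2 - s) := by
    intro x
    have h1 := ENNReal.lintegral_mul_le_Lp_mul_Lq (volume.restrict (ball (0:ℂ) 1)) Real.HolderConjugate.two_two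
      (f := fun y => (‖x - y‖ₑ⁻¹) ^ (s/2)) (g := fun y => g y * (‖x - y‖ₑ⁻¹) ^ (1 - s/2))
      ((hkx x).pow_const _).aemeasurable (hg.mul ((hkx x).pow_const _)).aemeasurable
    have h2 : ∀ y, ((fun y => (‖x - y‖ₑ⁻¹) ^ (s/2)) * (fun y => g y * (‖x - y‖ₑ⁻¹) ^ (1 - s/2))) y = g y * ‖x - y‖ₑ⁻¹ := by
      intro y
      simp only [Pi.mul_apply]
      rw [mul_left_comm, ← ENNReal.rpow_add_of_nonneg _ _ (by linarith) (by linarith)]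
      rw [show s / 2 + (1 - s/2) = 1 by ring, ENNReal.rpow_one]
    simp only [h2] at h1
    calc _ ≤ _ := ENNReal.rpow_le_rpow h1 (by norm_num)
      _ = (∫⁻ y in ball (0:ℂ) 1, (‖x - y‖ₑ⁻¹) ^ s) * ∫⁻ y in ball (0:ℂ) 1, g y ^ (2:ℝ) * (‖x - y‖ₑ⁻¹) ^ (2 - s) := by
        rw [ENNReal.mul_rpow_of_nonneg _ _ (by norm_num), ← ENNReal.rpow_mul, ← ENNReal.rpow_mul]
        rw [show (1/2:ℝ) * 2 = 1 by norm_num, ENNReal.rpow_one, ENNReal.rpow_one]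
        congr 2
        · ext y; rw [← ENNReal.rpow_mul]; congr 1; ring
        · ext y; rw [ENNReal.mul_rpow_of_nonneg _ _ (by norm_num), ← ENNReal.rpow_mul]; congr 2; ring
      _ ≤ _ := by gcongr; exact hk x
  have hh : ∀ y : ℂ, ∫⁻ x in ball (0:ℂ) 1, w x ^ (2:ℝ) * (‖x - y‖ₑ⁻¹) ^ (2 - s) ≤
      (∫⁻ x in ball (0:ℂ) 1, w x ^ α) ^ (2 / α) * A ^ ((α - 2) / α) := by
    intro y
    have hα2 : α - 2 ≠ 0 := by linarith
    have hα0 : α ≠ 0 := by linarith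
    have hconj : (α / 2).HolderConjugate (α / (α - 2)) := by
      rw [Real.holderConjugate_iff]
      constructor
      · linarith
      · field_simp; ring
    have h1 := ENNReal.lintegral_mul_le_Lp_mul_Lq (volume.restrict (ball (0:ℂ) 1)) hconj
      (f := fun x => w x ^ (2:ℝ)) (g := fun x => (‖x - y‖ₑ⁻¹) ^ (2 - s))
      (hw.pow_const _).aemeasurable ((hky y).pow_const _).aemeasurable
    simp only [Pi.mul_apply, ← ENNReal.rpow_mul, one_div_div] at h1
    have e1 : 2 * (α / 2) = α := by ring
    have e2 : (2 - s) * (α / (α - 2)) = s := by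
      rw [hs]; field_simp; ring
    rw [e1, e2] at h1
    refine h1.trans ?_
    gcongr
    have := hk y
    simp only [enorm_sub_rev y] at this
    exact this
  calc _ ≤ ∫⁻ x in ball (0:ℂ) 1, w x ^ (2:ℝ) * (A * ∫⁻ y in ball (0:ℂ) 1, g y ^ (2:ℝ) * (‖x - y‖ₑ⁻¹) ^ (2 - s)) := by
        gcongr with x; exact hcs x
    _ = A * ∫⁻ x in ball (0:ℂ) 1, ∫⁻ y in ball (0:ℂ) 1, w x ^ (2:ℝ) * (g y ^ (2:ℝ) * (‖x - y‖ₑ⁻¹) ^ (2 - s)) := by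
        rw [← lintegral_const_mul]
        · congr 1; ext x
          rw [lintegral_const_mul, mul_left_comm]
          exact (hg.pow_const _).mul ((hkx x).pow_const _)
        · refine Measurable.lintegral_prod_right' (f := fun p : ℂ × ℂ => w p.1 ^ (2:ℝ) * (g p.2 ^ (2:ℝ) * (‖p.1 - p.2‖ₑ⁻¹) ^ (2 - s))) ?_
          fun_prop
    _ = A * ∫⁻ y in ball (0:ℂ) 1, ∫⁻ x in ball (0:ℂ) 1, w x ^ (2:ℝ) * (g y ^ (2:ℝ) * (‖x - y‖ₑ⁻¹) ^ (2 - s)) := by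
        rw [lintegral_lintegral_swap]
        apply Measurable.aemeasurable
        fun_prop
    _ = A * ∫⁻ y in ball (0:ℂ) 1, g y ^ (2:ℝ) * ∫⁻ x in ball (0:ℂ) 1, w x ^ (2:ℝ) * (‖x - y‖ₑ⁻¹) ^ (2 - s) := by
        congr 2; ext y
        rw [← lintegral_const_mul]
        · congr 1; ext x; ring
        · exact (hw.pow_const _).mul ((hky y).pow_const _)
    _ ≤ A * ∫⁻ y in ball (0:ℂ) 1, g y ^ (2:ℝ) * ((∫⁻ x in ball (0:ℂ) 1, w x ^ α) ^ (2 / α) * A ^ ((α - 2) / α)) := by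
        gcongr with y; exact hh y
    _ = _ := by
        rw [lintegral_mul_const _ (hg.pow_const _)]
        have : A ^ ((2 * α - 2) / α) = A * A ^ ((α - 2)/α) := by
          conv_rhs => rw [← ENNReal.rpow_one A, ← ENNReal.rpow_mul, one_mul]
          rw [← ENNReal.rpow_add_of_nonneg _ _ zero_le_one (div_nonneg (by linarith) (by linarith))]
          congr 1; field_simp; ring
        rw [this]; ring

lemma qd_tint (ρ : ℝ) (hρ : 0 < ρ) :
    ∫⁻ t in Set.Ioo (0:ℝ) 1, (if ρ < 2 * t then ENNReal.ofReal ((t^3)⁻¹) else 0) ≤ 2 * ((ENNReal.ofReal ρ)⁻¹)^2 := by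
  have hint : IntegrableOn (fun t : ℝ => t ^ (-3:ℝ)) (Set.Ioi (ρ/2)) := integrableOn_Ioi_rpow_of_lt (by norm_num) (by positivity)
  calc _ ≤ ∫⁻ t in Set.Ioi (ρ/2), ENNReal.ofReal (t ^ (-3:ℝ)) := by
        rw [← lintegral_indicator measurableSet_Ioo, ← lintegral_indicator measurableSet_Ioi]
        apply lintegral_mono
        intro t
        by_cases h1 : t ∈ Set.Ioo (0:ℝ) 1
        · by_cases h2 : ρ < 2 * t
          · have h3 : t ∈ Set.Ioi (ρ/2) := by simp; linarith
            simp only [Set.indicator_of_mem h1, Set.indicator_of_mem h3, if_pos h2]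
            rw [Real.rpow_neg h1.1.le]; norm_cast
          · simp [Set.indicator_of_mem h1, if_neg h2]
        · simp [Set.indicator_of_notMem h1]
    _ = ENNReal.ofReal (2 * (ρ⁻¹)^2) := by
        rw [← ofReal_integral_eq_lintegral_ofReal hint, integral_Ioi_rpow_of_lt (by norm_num) (by positivity)]
        · congr 1
          rw [show (-3 + 1 : ℝ) = -(2:ℕ) by norm_num, Real.rpow_neg (by positivity), Real.rpow_natCast]
          field_simp
          norm_num
        · filter_upwards [ae_restrict_mem measurableSet_Ioi] with t ht
          have : 0 < t := lt_trans (by positivity) ht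
          positivity
    _ = _ := by
        rw [ENNReal.ofReal_mul (by norm_num), ENNReal.ofReal_pow (by positivity), ENNReal.ofReal_inv_of_pos hρ]
        simp

lemma qd_ftc (u : ℂ → ℝ) (hu : ContDiffOn ℝ 1 u (ball 0 1)) (x y : ℂ) (hx : x ∈ ball (0:ℂ) 1) (hy : y ∈ ball (0:ℂ) 1) :
    ‖u x - u y‖ₑ ≤ ∫⁻ t in Set.Ioo (0:ℝ) 1, ‖fderiv ℝ u (x + t • (y - x))‖ₑ * ‖y - x‖ₑ := by
  have hmem : ∀ t ∈ Set.Icc (0:ℝ) 1, x + t • (y - x) ∈ ball (0:ℂ) 1 := by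
    intro t ht
    exact (convex_ball (0:ℂ) 1).add_smul_sub_mem hx hy ht
  have hder : ∀ t ∈ Set.uIcc (0:ℝ) 1, HasDerivAt (fun t : ℝ => u (x + t • (y - x))) (fderiv ℝ u (x + t • (y - x)) (y - x)) t := by
    intro t ht
    rw [Set.uIcc_of_le zero_le_one] at ht
    have h1 : HasFDerivAt u (fderiv ℝ u (x + t • (y - x))) (x + t • (y - x)) :=
      ((hu.differentiableOn one_ne_zero).differentiableAt (isOpen_ball.mem_nhds (hmem t ht))).hasFDerivAt
    have h2 : HasDerivAt (fun t : ℝ => x + t • (y - x)) (y - x) t := by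
      simpa using ((hasDerivAt_id t).smul_const (y - x)).const_add x
    exact h1.comp_hasDerivAt t h2
  have hcf : ContinuousOn (fderiv ℝ u) (ball 0 1) := hu.continuousOn_fderiv_of_isOpen isOpen_ball le_rfl
  have hc : ContinuousOn (fun t : ℝ => fderiv ℝ u (x + t • (y - x)) (y - x)) (Set.uIcc (0:ℝ) 1) := by
    rw [Set.uIcc_of_le zero_le_one]
    have : ContinuousOn (fun t : ℝ => fderiv ℝ u (x + t • (y - x))) (Set.Icc (0:ℝ) 1) :=
      hcf.comp (by fun_prop) hmem
    exact this.clm_apply continuousOn_const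
  have h := intervalIntegral.integral_eq_sub_of_hasDerivAt hder hc.intervalIntegrable
  simp only [one_smul, zero_smul, add_zero, add_sub_cancel] at h
  rw [intervalIntegral.integral_of_le zero_le_one, integral_Ioc_eq_integral_Ioo] at h
  rw [← enorm_neg, neg_sub, ← h]
  refine (enorm_integral_le_lintegral_enorm _).trans (lintegral_mono fun t => ?_)
  exact ContinuousLinearMap.le_opENorm _ _

lemma qd_cov (g : ℂ → ℝ≥0∞) (x : ℂ) (hx : x ∈ ball (0:ℂ) 1) (t : ℝ) (ht : t ∈ Set.Ioo (0:ℝ) 1) :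
    ∫⁻ y in ball (0:ℂ) 1, g (x + t • (y - x)) * ‖y - x‖ₑ ≤
     ∫⁻ y in ball (0:ℂ) 1, g y * ‖y - x‖ₑ * (if ‖y - x‖ < 2 * t then ENNReal.ofReal ((t^3)⁻¹) else 0) := by
  set G : ℂ → ℝ≥0∞ := fun y => g y * ‖y - x‖ₑ * (if ‖y - x‖ < 2 * t then ENNReal.ofReal ((t^3)⁻¹) else 0) with hG
  set T : ℂ → ℂ := fun y => x + t • (y - x) with hT
  have ht0 := ht.1
  have hTd : ∀ y ∈ ball (0:ℂ) 1, HasFDerivWithinAt T (t • ContinuousLinearMap.id ℝ ℂ) (ball (0:ℂ) 1) y := by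
    intro y hy
    exact ((((hasFDerivAt_id y).sub_const x).const_smul t).const_add x).hasFDerivWithinAt
  have hTi : Set.InjOn T (ball 0 1) := by
    intro a _ b _ hab
    simpa [hT, ht0.ne'] using hab
  have h := lintegral_image_eq_lintegral_abs_det_fderiv_mul volume (measurableSet_ball) hTd hTi G
  have hsub : T '' ball 0 1 ⊆ ball 0 1 := by
    rintro _ ⟨y, hy, rfl⟩
    exact (convex_ball (0:ℂ) 1).add_smul_sub_mem hx hy ⟨ht.1.le, ht.2.le⟩
  have hdet : (t • ContinuousLinearMap.id ℝ ℂ).det = t ^ 2 := by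
    simp [ContinuousLinearMap.det, Complex.finrank_real_complex]
  refine le_trans (le_of_eq ?_) (lintegral_mono_set hsub)
  rw [h]
  refine setLIntegral_congr_fun measurableSet_ball fun y hy => ?_
  have e1 : T y - x = t • (y - x) := by simp [hT]
  have hlt : ‖y - x‖ < 2 := by
    have := norm_sub_le y x
    simp at hx hy; linarith
  have e2 : ‖T y - x‖ < 2 * t := by
    rw [e1, norm_smul, Real.norm_of_nonneg ht0.le]; nlinarith
  simp only [hG, if_pos e2, hdet]
  rw [e1, enorm_smul]
  change g (T y) * _ = _
  have e3 : ENNReal.ofReal |t^2| * ‖t‖ₑ * ENNReal.ofReal ((t^3)⁻¹) = 1 := by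
    rw [Real.enorm_eq_ofReal ht0.le, ← ENNReal.ofReal_mul (by positivity), ← ENNReal.ofReal_mul (by positivity), abs_of_nonneg (by positivity)]
    rw [show t^2 * t * (t^3)⁻¹ = 1 by field_simp]; simp
  calc _ = g (T y) * ‖y - x‖ₑ * (ENNReal.ofReal |t^2| * ‖t‖ₑ * ENNReal.ofReal ((t^3)⁻¹)) := by rw [e3, mul_one]
    _ = _ := by ring

lemma qd_point (u : ℂ → ℝ) (hu : ContDiffOn ℝ 1 u (ball 0 1)) (x : ℂ) (hx : x ∈ ball (0:ℂ) 1) :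
    ∫⁻ y in ball (0:ℂ) 1, ‖u x - u y‖ₑ ≤ 2 * ∫⁻ y in ball (0:ℂ) 1, ‖fderiv ℝ u y‖ₑ * ‖x - y‖ₑ⁻¹ := by
  have hgm : Measurable (fun y => ‖fderiv ℝ u y‖ₑ) := (measurable_fderiv ℝ u).enorm
  set g : ℂ → ℝ≥0∞ := fun y => ‖fderiv ℝ u y‖ₑ with hg
  calc _ ≤ ∫⁻ y in ball (0:ℂ) 1, ∫⁻ t in Set.Ioo (0:ℝ) 1, g (x + t • (y - x)) * ‖y - x‖ₑ :=
        setLIntegral_mono' measurableSet_ball fun y hy => qd_ftc u hu x y hx hy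
    _ = ∫⁻ t in Set.Ioo (0:ℝ) 1, ∫⁻ y in ball (0:ℂ) 1, g (x + t • (y - x)) * ‖y - x‖ₑ := by
        apply lintegral_lintegral_swap
        apply Measurable.aemeasurable
        have m1 : Measurable (fun p : ℂ × ℝ => x + p.2 • (p.1 - x)) := by fun_prop
        have m2 : Measurable (fun p : ℂ × ℝ => ‖p.1 - x‖ₑ) := by fun_prop
        exact (hgm.comp m1).mul m2
    _ ≤ ∫⁻ t in Set.Ioo (0:ℝ) 1, ∫⁻ y in ball (0:ℂ) 1, g y * ‖y - x‖ₑ * (if ‖y - x‖ < 2 * t then ENNReal.ofReal ((t^3)⁻¹) else 0) :=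
        setLIntegral_mono' measurableSet_Ioo fun t ht => qd_cov g x hx t ht
    _ = ∫⁻ y in ball (0:ℂ) 1, ∫⁻ t in Set.Ioo (0:ℝ) 1, g y * ‖y - x‖ₑ * (if ‖y - x‖ < 2 * t then ENNReal.ofReal ((t^3)⁻¹) else 0) := by
        apply lintegral_lintegral_swap
        apply Measurable.aemeasurable
        have m2 : Measurable (fun p : ℝ × ℂ => ‖p.2 - x‖ₑ) := by fun_prop
        have m3 : Measurable (fun p : ℝ × ℂ => if ‖p.2 - x‖ < 2 * p.1 then ENNReal.ofReal ((p.1^3)⁻¹) else 0) :=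
          Measurable.ite (measurableSet_lt (by fun_prop) (by fun_prop)) (by fun_prop) (by fun_prop)
        exact ((hgm.comp measurable_snd).mul m2).mul m3
    _ ≤ ∫⁻ y in ball (0:ℂ) 1, 2 * (g y * ‖x - y‖ₑ⁻¹) := by
        apply lintegral_mono
        intro y
        dsimp only
        rcases eq_or_ne y x with rfl | hne
        · simp
        have hpos : 0 < ‖y - x‖ := norm_pos_iff.2 (sub_ne_zero.2 hne)
        rw [lintegral_const_mul _ (Measurable.ite (measurableSet_lt (by fun_prop) (by fun_prop)) (by fun_prop) (by fun_prop))]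
        refine (mul_le_mul_right (qd_tint _ hpos) _).trans (le_of_eq ?_)
        rw [ofReal_norm, enorm_sub_rev x y]
        have h0 : ‖y - x‖ₑ ≠ 0 := by simpa using sub_ne_zero.2 hne
        have h1 : ‖y - x‖ₑ ≠ ∞ := enorm_ne_top
        calc g y * ‖y - x‖ₑ * (2 * ‖y - x‖ₑ⁻¹ ^ 2) = 2 * (g y * ‖y - x‖ₑ⁻¹) * (‖y - x‖ₑ * ‖y - x‖ₑ⁻¹) := by ring
          _ = _ := by rw [ENNReal.mul_inv_cancel h0 h1, mul_one]
    _ = _ := by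
        rw [lintegral_const_mul]
        exact hgm.mul (by fun_prop)

lemma qd_disc (α : ℝ) (hα : 2 < α) (u : ℂ → ℝ) (hu : ContDiffOn ℝ 1 u (ball 0 1)) (w : ℂ → ℝ≥0∞) (hw : Measurable w)
    (hE : ∫⁻ y in ball (0:ℂ) 1, ‖fderiv ℝ u y‖ₑ ^ (2:ℝ) < ∞) :
    ∃ c : ℝ, ∫⁻ x in ball (0:ℂ) 1, w x ^ (2:ℝ) * ‖u x - c‖ₑ ^ (2:ℝ) ≤
      ENNReal.ofReal (4 / π ^ 2) * ((ENNReal.ofReal (2*π/(2-α/(α-1)))) ^ ((2 * α - 2) / α) *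
        (∫⁻ x in ball (0:ℂ) 1, w x ^ α) ^ (2 / α) * ∫⁻ y in ball (0:ℂ) 1, ‖fderiv ℝ u y‖ₑ ^ (2:ℝ)) := by
  have hα1 : 0 < α - 1 := by linarith
  have hs0 : 0 < α / (α - 1) := by positivity
  have hs2 : α / (α - 1) < 2 := by rw [div_lt_iff₀ hα1]; linarith
  have hgm : Measurable (fun y => ‖fderiv ℝ u y‖ₑ) := (measurable_fderiv ℝ u).enorm
  set g : ℂ → ℝ≥0∞ := fun y => ‖fderiv ℝ u y‖ₑ with hg
  set A := ENNReal.ofReal (2*π/(2-α/(α-1))) with hA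
  have hol := fun w hw => qd_holder α hα A g w hgm hw (fun x => qd_kernel _ hs0 hs2 x)
  set V : ℂ → ℝ≥0∞ := fun x => ∫⁻ y in ball (0:ℂ) 1, g y * ‖x - y‖ₑ⁻¹ with hV
  have hVm : Measurable V := by
    have m2 : Measurable (fun p : ℂ × ℂ => ‖p.1 - p.2‖ₑ⁻¹) := by fun_prop
    exact Measurable.lintegral_prod_right' ((hgm.comp measurable_snd).mul m2)
  have hexp : 0 ≤ (2 * α - 2) / α := div_nonneg (by linarith) (by linarith)
  have hvol : volume (ball (0:ℂ) 1) = ENNReal.ofReal π := by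
    rw [Complex.volume_ball]; simp [ENNReal.ofReal, Real.toNNReal_of_nonneg Real.pi_pos.le]; rfl
  have hfin : ∫⁻ x in ball (0:ℂ) 1, V x ^ (2:ℝ) < ∞ := by
    have h := hol (fun _ => 1) measurable_const
    simp only [ENNReal.one_rpow, one_mul, lintegral_const, Measure.restrict_apply_univ, hvol] at h
    refine h.trans_lt (ENNReal.mul_lt_top (ENNReal.mul_lt_top ?_ ?_) hE)
    · exact ENNReal.rpow_lt_top_of_nonneg hexp (by simp [hA])
    · exact ENNReal.rpow_lt_top_of_nonneg (by positivity) (by simp)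
  have hcu : ContinuousOn u (ball 0 1) := hu.continuousOn
  have hum : AEStronglyMeasurable u (volume.restrict (ball (0:ℂ) 1)) := hcu.aestronglyMeasurable measurableSet_ball
  have hint : IntegrableOn u (ball (0:ℂ) 1) := by
    have hae := ae_lt_top (hVm.pow_const 2) hfin.ne
    have hae2 := hae.and (ae_restrict_mem (measurableSet_ball (x := (0:ℂ)) (ε := 1)))
    have hne : Filter.NeBot (ae (volume.restrict (ball (0:ℂ) 1))) := by
      rw [ae_neBot]
      intro h
      have : volume (ball (0:ℂ) 1) = 0 := by rw [← Measure.restrict_apply_univ, h]; simp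
      rw [hvol] at this
      simp at this
      linarith [Real.pi_pos]
    obtain ⟨x, hx1, hx2⟩ := hae2.exists
    have hx1' : V x < ∞ := by
      by_contra hcon
      simp only [not_lt, top_le_iff] at hcon
      rw [hcon] at hx1
      simp at hx1
    have h1 := (qd_point u hu x hx2).trans_lt (ENNReal.mul_lt_top (by simp) hx1')
    have h2 : IntegrableOn (fun y => u x - u y) (ball (0:ℂ) 1) := ⟨aestronglyMeasurable_const.sub hum, h1⟩
    have h3 : IntegrableOn (fun y => u x - (u x - u y)) (ball (0:ℂ) 1) :=
      Integrable.sub (integrableOn_const (by rw [hvol]; simp)) h2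
    simpa using h3
  refine ⟨π⁻¹ * ∫ y in ball (0:ℂ) 1, u y, ?_⟩
  set c := π⁻¹ * ∫ y in ball (0:ℂ) 1, u y with hc
  have hpt : ∀ x ∈ ball (0:ℂ) 1, ‖u x - c‖ₑ ≤ ENNReal.ofReal (2 / π) * V x := by
    intro x hx
    have e : u x - c = π⁻¹ * ∫ y in ball (0:ℂ) 1, (u x - u y) := by
      have hk : Integrable (fun _ : ℂ => u x) (volume.restrict (ball (0:ℂ) 1)) :=
        integrableOn_const (by rw [hvol]; simp)
      rw [integral_sub hk hint]
      simp [Measure.real, hvol, Real.pi_pos.le, mul_sub, hc]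
    rw [e, enorm_mul, Real.enorm_eq_ofReal (by positivity)]
    calc _ ≤ ENNReal.ofReal π⁻¹ * (2 * V x) := by
          gcongr
          exact (enorm_integral_le_lintegral_enorm _).trans (qd_point u hu x hx)
      _ = _ := by
          rw [div_eq_mul_inv, ENNReal.ofReal_mul (by norm_num)]
          simp; ring
  calc _ ≤ ∫⁻ x in ball (0:ℂ) 1, ENNReal.ofReal (4 / π ^ 2) * (w x ^ (2:ℝ) * V x ^ (2:ℝ)) := by
        refine setLIntegral_mono' measurableSet_ball fun x hx => ?_
        calc _ ≤ w x ^ (2:ℝ) * (ENNReal.ofReal (2 / π) * V x) ^ (2:ℝ) := by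
              gcongr; exact hpt x hx
          _ = _ := by
              rw [ENNReal.mul_rpow_of_nonneg _ _ (by norm_num), ENNReal.ofReal_rpow_of_nonneg (by positivity) (by norm_num)]
              rw [show ((2/π)^(2:ℝ) : ℝ) = 4/π^2 by norm_cast; rw [div_pow]; norm_num]
              ring
    _ = ENNReal.ofReal (4 / π ^ 2) * ∫⁻ x in ball (0:ℂ) 1, (w x ^ (2:ℝ) * V x ^ (2:ℝ)) :=
        lintegral_const_mul _ ((hw.pow_const _).mul (hVm.pow_const _))
    _ ≤ _ := by
        gcongr
        exact hol w hw

lemma qd_conf (φ : ℂ → ℂ) (hφd : DifferentiableOn ℂ φ (ball 0 1)) (hφi : Set.InjOn φ (ball 0 1)) (H : ℂ → ℝ≥0∞) :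
    ∫⁻ z in φ '' ball 0 1, H z = ∫⁻ z in ball (0:ℂ) 1, ‖deriv φ z‖ₑ ^ (2:ℝ) * H (φ z) := by
  have hd : ∀ z ∈ ball (0:ℂ) 1, HasFDerivWithinAt φ ((fderiv ℂ φ z).restrictScalars ℝ) (ball (0:ℂ) 1) z := by
    intro z hz
    exact ((hφd.differentiableAt (isOpen_ball.mem_nhds hz)).hasFDerivAt.restrictScalars ℝ).hasFDerivWithinAt
  rw [lintegral_image_eq_lintegral_abs_det_fderiv_mul volume measurableSet_ball hd hφi]
  refine setLIntegral_congr_fun measurableSet_ball fun z hz => ?_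
  congr 1
  have : ((fderiv ℂ φ z).restrictScalars ℝ).det = ‖deriv φ z‖ ^ 2 := by
    have e : ((fderiv ℂ φ z).restrictScalars ℝ : ℂ →ₗ[ℝ] ℂ) = ((fderiv ℂ φ z : ℂ →ₗ[ℂ] ℂ)).restrictScalars ℝ := rfl
    rw [ContinuousLinearMap.det, e, LinearMap.det_restrictScalars]
    have e2 : (fderiv ℂ φ z : ℂ →ₗ[ℂ] ℂ) = deriv φ z • LinearMap.id := by
      ext; simp
    rw [e2, LinearMap.det_smul]
    simp [Algebra.norm_complex_eq, Complex.normSq_eq_norm_sq]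
  rw [this, abs_of_nonneg (by positivity), ENNReal.ofReal_pow (norm_nonneg _), ofReal_norm]
  norm_cast

lemma qd_mean (Ω : Set ℂ) (h0 : volume Ω ≠ 0) (h1 : volume Ω ≠ ∞) (f : ℂ → ℝ) (hf : AEStronglyMeasurable f (volume.restrict Ω))
    (hf2 : IntegrableOn (fun z => (f z) ^ 2) Ω) (c : ℝ) :
    IntegrableOn (fun z => (f z - c) ^ 2) Ω ∧
    ∫ z in Ω, (f z - ⨍ w in Ω, f w) ^ 2 ≤ ∫ z in Ω, (f z - c) ^ 2 := by
  have : IsFiniteMeasure (volume.restrict Ω) := ⟨by simpa using h1.lt_top⟩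
  have hm : MemLp f 2 (volume.restrict Ω) := (memLp_two_iff_integrable_sq hf).2 hf2
  have hi : Integrable f (volume.restrict Ω) := hm.integrable (by norm_num)
  have hsq : ∀ a : ℝ, Integrable (fun z => (f z - a) ^ 2) (volume.restrict Ω) := fun a =>
    (hm.sub (memLp_const a)).integrable_sq
  have hexp : ∀ a : ℝ, ∫ z in Ω, (f z - a) ^ 2 = (∫ z in Ω, (f z)^2) - 2 * a * (∫ z in Ω, f z) + a^2 * volume.real Ω := by
    intro a
    have : (fun z => (f z - a)^2) = fun z => ((f z)^2 - (2 * a) * f z) + a^2 := by ext z; ring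
    have hb : Integrable (fun z => (f z)^2 - (2 * a) * f z) (volume.restrict Ω) := hf2.sub (hi.const_mul _)
    rw [this, integral_add hb (integrable_const _), integral_sub hf2 (hi.const_mul _), integral_const_mul]
    simp [mul_comm]
  refine ⟨hsq c, ?_⟩
  have hv : 0 < volume.real Ω := ENNReal.toReal_pos h0 h1
  rw [hexp, hexp, setAverage_eq, smul_eq_mul]
  set J := ∫ z in Ω, f z
  set v := volume.real Ω
  have : 0 ≤ (c * v - J)^2 / v := by positivity
  have e : (c * v - J)^2 / v = c^2 * v - 2 * c * J + J^2 / v := by field_simp; ring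
  have e2 : (v⁻¹ * J)^2 * v = J^2 / v := by field_simp
  have e3 : 2 * (v⁻¹ * J) * J = 2 * (J^2 / v) := by field_simp
  rw [e2, e3]
  linarith

lemma qd_const (α : ℝ) (hα : 2 < α) :
    (4 / π ^ 2) * (2*π/(2-α/(α-1))) ^ ((2 * α - 2) / α) = (4 / π ^ (2 / α)) * ((2 * α - 2) / (α - 2)) ^ ((2 * α - 2) / α) := by
  have h1 : α - 1 ≠ 0 := by linarith
  have h2 : 0 < α - 2 := by linarith
  have h3 : 2 - α/(α-1) = (α - 2)/(α-1) := by field_simp; ring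
  have h4 : 2*π/(2-α/(α-1)) = π * ((2*α-2)/(α-2)) := by rw [h3]; field_simp
  rw [h4, Real.mul_rpow Real.pi_pos.le (div_nonneg (by linarith) h2.le)]
  have h5 : (π:ℝ) ^ ((2*α-2)/α) * π ^ (2/α) = π^2 := by
    rw [← Real.rpow_add Real.pi_pos, ← Real.rpow_natCast]
    congr 1
    field_simp; push_cast; ring
  have h6 : 0 < π ^ (2/α) := Real.rpow_pos_of_pos Real.pi_pos _
  have h7 : 0 < π ^ ((2*α-2)/α) := Real.rpow_pos_of_pos Real.pi_pos _
  rw [← h5]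
  field_simp

/-- Rayleigh-quotient form of the bound
`1/μ₁(Ω) ≤ (4/π^{2/α})((2α−2)/(α−2))^{(2α−2)/α} Q(α,Ω)^{2/α}` on a `C¹`
`K`-quasidisc `Ω`, where `Q(α,Ω) = ∬_𝔻 |φ′|^α dxdy` is the hyperbolic
`α`-dilatation computed from a conformal map `φ : 𝔻 → Ω`. -/
theorem poincare_inequality_quasidisc_dilatation
    (K : ℝ) (hK : 1 ≤ K) (Φ : ℂ → ℂ) (hΦ : IsC1QCPlane K Φ)
    (Ω : Set ℂ) (hΩ : Ω = Φ '' Metric.ball 0 1)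
    (φ : ℂ → ℂ) (hφd : DifferentiableOn ℂ φ (Metric.ball 0 1))
    (hφi : Set.InjOn φ (Metric.ball 0 1)) (hφim : φ '' Metric.ball 0 1 = Ω)
    (α : ℝ) (hα : 2 < α) (hαK : α * (K ^ 2 - 1) < 2 * K ^ 2)
    (f : ℂ → ℝ) (hf : ContDiffOn ℝ 1 f Ω)
    (hf2 : IntegrableOn (fun z => (f z) ^ 2) Ω)
    (hg2 : IntegrableOn (fun z => ‖fderiv ℝ f z‖ ^ 2) Ω) :
    ∫ z in Ω, (f z - ⨍ w in Ω, f w) ^ 2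
      ≤ (4 / π ^ (2 / α)) * ((2 * α - 2) / (α - 2)) ^ ((2 * α - 2) / α) *
          ((∫⁻ z in Metric.ball (0 : ℂ) 1, (‖deriv φ z‖₊ : ℝ≥0∞) ^ α).toReal) ^ (2 / α) *
          ∫ z in Ω, ‖fderiv ℝ f z‖ ^ 2 := by
  obtain ⟨r, hr, hrΩ, hS, hS2, hne, hd⟩ := qd_defining Φ hΦ.1 hΦ.2.1 (fun z => (hΦ.2.2 z).1)
  have hΩr : Ω = {w | r w < 0} := hΩ.trans hrΩ
  have hα0 : 0 < α := by linarith
  have hγ : 1 / (2 * α) < 1 := by rw [div_lt_one (by positivity)]; linarith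
  have hγ' : 0 < 1 / (2 * α) := by positivity
  obtain ⟨C, hC, hCb⟩ := qd_growth r hr hS hS2 hne hd φ hφd hφi (hφim.trans hΩr) (1 - 1 / (2 * α)) (by linarith) (by linarith)
  have hQ := qd_Q_fin φ α hα C hC hCb
  have hΩo : IsOpen Ω := by rw [hΩr]; exact isOpen_lt hr.continuous continuous_const
  have hΩfin : volume Ω ≠ ∞ := by
    refine ne_top_of_le_ne_top hS2.measure_lt_top.ne (measure_mono ?_)
    rw [hΩr]; exact fun w (hw : r w < 0) => hw.le
  have hΩne : volume Ω ≠ 0 := by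
    have : Ω.Nonempty := by rw [← hφim]; exact ⟨φ 0, 0, by simp, rfl⟩
    exact (hΩo.measure_pos volume this).ne'
  have hmaps : Set.MapsTo φ (ball 0 1) Ω := by rw [← hφim]; exact Set.mapsTo_image _ _
  have hu : ContDiffOn ℝ 1 (fun z => f (φ z)) (ball 0 1) := by
    have h1 : ContDiffOn ℂ 1 φ (ball 0 1) := hφd.contDiffOn isOpen_ball
    exact hf.comp (h1.restrict_scalars ℝ) hmaps
  have hder : ∀ z ∈ ball (0:ℂ) 1, ‖fderiv ℝ (fun z => f (φ z)) z‖ₑ ^ (2:ℝ) ≤ ‖deriv φ z‖ₑ ^ (2:ℝ) * ‖fderiv ℝ f (φ z)‖ₑ ^ (2:ℝ) := by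
    intro z hz
    have h1 : HasFDerivAt φ ((fderiv ℂ φ z).restrictScalars ℝ) z :=
      (hφd.differentiableAt (isOpen_ball.mem_nhds hz)).hasFDerivAt.restrictScalars ℝ
    have h2 : HasFDerivAt f (fderiv ℝ f (φ z)) (φ z) :=
      ((hf.differentiableOn one_ne_zero).differentiableAt (hΩo.mem_nhds (hmaps hz))).hasFDerivAt
    have h3 : fderiv ℝ (fun z => f (φ z)) z = (fderiv ℝ f (φ z)).comp ((fderiv ℂ φ z).restrictScalars ℝ) := (h2.comp z h1).fderiv
    rw [← ENNReal.mul_rpow_of_nonneg _ _ (by norm_num)]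
    apply ENNReal.rpow_le_rpow _ (by norm_num)
    have h4 : ‖fderiv ℝ (fun z => f (φ z)) z‖ ≤ ‖deriv φ z‖ * ‖fderiv ℝ f (φ z)‖ := by
      rw [h3, mul_comm, norm_deriv_eq_norm_fderiv]
      refine (ContinuousLinearMap.opNorm_comp_le _ _).trans (le_of_eq ?_)
      rw [ContinuousLinearMap.norm_restrictScalars]
    rw [← ofReal_norm, ← ofReal_norm, ← ofReal_norm, ← ENNReal.ofReal_mul (norm_nonneg _)]
    exact ENNReal.ofReal_le_ofReal h4
  have hEeq : ∫⁻ z in Ω, ‖fderiv ℝ f z‖ₑ ^ (2:ℝ) = ENNReal.ofReal (∫ z in Ω, ‖fderiv ℝ f z‖ ^ 2) := by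
    rw [ofReal_integral_eq_lintegral_ofReal hg2 (Filter.Eventually.of_forall fun z => by positivity)]
    refine lintegral_congr fun z => ?_
    rw [ENNReal.ofReal_pow (norm_nonneg _), ofReal_norm]; norm_cast
  have hE : ∫⁻ z in ball (0:ℂ) 1, ‖fderiv ℝ (fun z => f (φ z)) z‖ₑ ^ (2:ℝ) ≤ ENNReal.ofReal (∫ z in Ω, ‖fderiv ℝ f z‖ ^ 2) := by
    rw [← hEeq, ← hφim, qd_conf φ hφd hφi]
    exact setLIntegral_mono' measurableSet_ball hder
  obtain ⟨c, hc⟩ := qd_disc α hα (fun z => f (φ z)) hu (fun z => ‖deriv φ z‖ₑ) (measurable_deriv φ).enorm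
    (hE.trans_lt ENNReal.ofReal_lt_top)
  rw [← qd_conf φ hφd hφi (fun z => ‖f z - c‖ₑ ^ (2:ℝ)), hφim] at hc
  obtain ⟨hci, hcm⟩ := qd_mean Ω hΩne hΩfin f (hf.continuousOn.aestronglyMeasurable hΩo.measurableSet) hf2 c
  refine hcm.trans ?_
  have hL : ∫⁻ z in Ω, ‖f z - c‖ₑ ^ (2:ℝ) = ENNReal.ofReal (∫ z in Ω, (f z - c) ^ 2) := by
    rw [ofReal_integral_eq_lintegral_ofReal hci (Filter.Eventually.of_forall fun z => by positivity)]
    refine lintegral_congr fun z => ?_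
    rw [← ofReal_norm, ENNReal.ofReal_rpow_of_nonneg (norm_nonneg _) (by norm_num)]
    norm_cast
    simp
  rw [hL] at hc
  set E := ∫ z in Ω, ‖fderiv ℝ f z‖ ^ 2 with hEd
  have hE0 : 0 ≤ E := integral_nonneg fun z => by positivity
  set Q := ∫⁻ z in Metric.ball (0 : ℂ) 1, (‖deriv φ z‖₊ : ℝ≥0∞) ^ α with hQd
  have hQ' : ∫⁻ z in Metric.ball (0 : ℂ) 1, ‖deriv φ z‖ₑ ^ α = ENNReal.ofReal Q.toReal := by
    rw [ENNReal.ofReal_toReal hQ.ne]; rfl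
  have hs2 : α / (α - 1) < 2 := by rw [div_lt_iff₀ (by linarith)]; linarith
  have hA0 : 0 ≤ 2*π/(2-α/(α-1)) := div_nonneg (by positivity) (by linarith)
  have hfinal : ENNReal.ofReal (∫ z in Ω, (f z - c) ^ 2) ≤
      ENNReal.ofReal ((4 / π ^ 2) * ((2*π/(2-α/(α-1))) ^ ((2 * α - 2) / α) * Q.toReal ^ (2/α) * E)) := by
    refine hc.trans ?_
    rw [hQ', ENNReal.ofReal_rpow_of_nonneg hA0 (div_nonneg (by linarith) hα0.le),
      ENNReal.ofReal_rpow_of_nonneg ENNReal.toReal_nonneg (by positivity),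
      ENNReal.ofReal_mul (by positivity), ENNReal.ofReal_mul (by positivity), ENNReal.ofReal_mul (by positivity)]
    gcongr
  have hfin2 := (ENNReal.ofReal_le_ofReal_iff (by positivity)).1 hfinal
  refine hfin2.trans (le_of_eq ?_)
  rw [← qd_const α hα]
  ring
end

section
/- Let Ω ⊂ ℂ be a C¹ K-quasidisc, let 2 < α satisfy α(K² − 1) < 2K², and suppose ν := 10^{4α}·((α−2)/(α−1))·(24π²K²)^α < 1. Then for every test function f on Ω, ∬_Ω |f − f_Ω|² dxdy ≤ (K²C_α²/π) · ((2α−2)/(α−2))^{(2α−2)/α} · exp{K²π²(2 + π⁴)²/(2 log 3)} · |Ω| · ∬_Ω |∇f|² dxdy, where C_α = 10⁶/[(α−1)(1−ν)]^{1/α}. (This is the Rayleigh-quotient form of the lower bound for the first nontrivial Neumann eigenvalue μ₁(Ω) of the Laplacian in Theorem A.) -/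
open MeasureTheory Metric Real
open scoped ENNReal NNReal

lemma qc_open {K : ℝ} {Φ : ℂ → ℂ} (h : IsC1QCPlane K Φ) : IsOpenMap Φ := by
  apply isOpenMap_of_hasStrictFDerivAt_equiv (𝕜 := ℝ)
    (f' := fun x => (fderiv ℝ Φ x).toContinuousLinearEquivOfDetNeZero (h.2.2 x).1.ne')
  intro x
  rw [ContinuousLinearMap.coe_toContinuousLinearEquivOfDetNeZero]
  exact h.1.contDiffAt.hasStrictFDerivAt (by norm_num)

lemma top_max {Φ : ℂ → ℂ} (ho : IsOpenMap Φ) (hc : Continuous Φ)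
    (x w : ℂ) {t : ℝ} (ht : 0 < t) :
    ∃ q ∈ sphere x t, ∀ z ∈ closedBall x t, dist (Φ z) w ≤ dist (Φ q) w := by
  obtain ⟨q, hq, hmax⟩ := (isCompact_closedBall x t).exists_isMaxOn
    (f := fun z => dist (Φ z) w) ⟨x, by simp [ht.le]⟩ (by fun_prop)
  refine ⟨q, ?_, fun z hz => hmax hz⟩
  by_contra hne
  have hqb : q ∈ ball x t := by
    rw [mem_closedBall] at hq
    rw [mem_sphere] at hne
    exact lt_of_le_of_ne hq hne
  have hop : IsOpen (Φ '' ball x t) := ho _ isOpen_ball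
  have hmem : Φ q ∈ Φ '' ball x t := ⟨q, hqb, rfl⟩
  obtain ⟨e, he, hsub⟩ := Metric.isOpen_iff.1 hop _ hmem
  -- direction
  obtain ⟨v, hv1, hv2⟩ : ∃ v : ℂ, ‖v‖ = 1 ∧ Φ q - w = (‖Φ q - w‖ : ℂ) * v := by
    by_cases h0 : Φ q - w = 0
    · exact ⟨1, by simp, by simp [h0]⟩
    · refine ⟨(Φ q - w) / ‖Φ q - w‖, by simp [h0], ?_⟩
      have : (‖Φ q - w‖ : ℂ) ≠ 0 := by simpa using h0
      field_simp
  have h1 : Φ q + ((e / 2 : ℝ) : ℂ) * v ∈ ball (Φ q) e := by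
    rw [mem_ball, dist_eq_norm]
    simp [hv1]
    rw [abs_of_pos he]; linarith
  obtain ⟨y, hy, hyy⟩ := hsub h1
  have h2 : dist (Φ y) w ≤ dist (Φ q) w := hmax (ball_subset_closedBall hy)
  rw [hyy, dist_eq_norm, dist_eq_norm] at h2
  have h3 : Φ q + ((e / 2 : ℝ) : ℂ) * v - w = ((‖Φ q - w‖ + e / 2 : ℝ) : ℂ) * v := by
    push_cast
    linear_combination hv2
  rw [h3, norm_mul, hv1, Complex.norm_real, Real.norm_eq_abs,
    abs_of_nonneg (by positivity)] at h2
  linarith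

lemma top_conn {Φ : ℂ → ℂ} (ho : IsOpenMap Φ) (hc : Continuous Φ)
    (x : ℂ) {t : ℝ} (ht : 0 < t) {S : Set ℂ} (hS : IsPreconnected S) (hx : Φ x ∈ S)
    (hd : ∀ p ∈ sphere x t, Φ p ∉ S) : S ⊆ Φ '' ball x t := by
  have hcl : IsClosed (Φ '' closedBall x t) := ((isCompact_closedBall x t).image hc).isClosed
  refine IsPreconnected.subset_left_of_subset_union (ho _ isOpen_ball) hcl.isOpen_compl
    ?_ ?_ ⟨Φ x, hx, x, by simp [ht], rfl⟩ hS
  · rw [Set.disjoint_compl_right_iff_subset]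
    exact Set.image_mono ball_subset_closedBall
  · intro s hs
    by_cases h : s ∈ Φ '' closedBall x t
    · left
      obtain ⟨p, hp, rfl⟩ := h
      refine ⟨p, ?_, rfl⟩
      rw [mem_closedBall] at hp
      rw [mem_ball]
      exact lt_of_le_of_ne hp fun he => hd p (mem_sphere.2 he) hs
    · right; exact h

lemma top_min {Φ : ℂ → ℂ} (ho : IsOpenMap Φ) (hc : Continuous Φ) (hi : Function.Injective Φ)
    (x b : ℂ) {t : ℝ} (ht : 0 < t) (hb : t ≤ dist b x) :
    ∃ p ∈ sphere x t, dist (Φ p) (Φ x) ≤ dist (Φ b) (Φ x) := by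
  by_contra! hcon
  have := top_conn ho hc x ht (S := closedBall (Φ x) (dist (Φ b) (Φ x)))
    (convex_closedBall _ _).isPreconnected (by simp) (fun p hp => by
      simpa using hcon p hp)
  obtain ⟨y, hy, hyb⟩ := this (show Φ b ∈ _ by simp)
  rw [hi hyb] at hy
  rw [mem_ball] at hy
  linarith

/-- Cauchy--Schwarz with weight. -/
lemma cs_weight {α : Type*} [MeasurableSpace α] (μ : Measure α) {f g : α → ℝ≥0∞}
    (hf : AEMeasurable f μ) (hg : AEMeasurable g μ) :
    (∫⁻ a, f a * g a ∂μ) ^ 2 ≤ (∫⁻ a, f a ^ 2 ∂μ) * (∫⁻ a, g a ^ 2 ∂μ) := by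
  have h := ENNReal.lintegral_mul_le_Lp_mul_Lq μ Real.HolderConjugate.two_two hf hg
  calc (∫⁻ a, f a * g a ∂μ) ^ 2 ≤ ((∫⁻ (a : α), f a ^ (2:ℝ) ∂μ) ^ (1 / (2:ℝ)) *
        (∫⁻ (a : α), g a ^ (2:ℝ) ∂μ) ^ (1 / (2:ℝ))) ^ 2 := by
        gcongr; exact h
    _ = _ := by
        rw [mul_pow, ← ENNReal.rpow_natCast, ← ENNReal.rpow_natCast, ← ENNReal.rpow_mul,
          ← ENNReal.rpow_mul]
        norm_num


lemma circle_est {E : Type*} [NormedAddCommGroup E] [NormedSpace ℝ E] [CompleteSpace E]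
    {h : ℂ → E} (hh : ContDiff ℝ 1 h) (x : ℂ) {t : ℝ} (ht : 0 < t) {p q : ℂ}
    (hp : p ∈ sphere x t) (hq : q ∈ sphere x t) :
    ‖h p - h q‖ₑ ≤ ∫⁻ θ in Set.Ioo (-π) π,
      ENNReal.ofReal t * ‖fderiv ℝ h (x + t * Complex.exp (θ * Complex.I))‖ₑ := by
  set γ : ℝ → ℂ := fun θ => x + t * Complex.exp (θ * Complex.I) with hγ
  have hγd : ∀ θ : ℝ, HasDerivAt γ (t * (Complex.exp (θ * Complex.I) * Complex.I)) θ := by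
    intro θ
    have h1 : HasDerivAt (fun θ : ℝ => (θ : ℂ) * Complex.I) (Complex.I) θ := by
      simpa using (Complex.ofRealCLM.hasDerivAt (x := θ)).mul_const Complex.I
    exact (h1.cexp.const_mul (t : ℂ)).const_add x
  have hγc : Continuous γ := by fun_prop
  have hpar : ∀ p ∈ sphere x t, ∃ θ ∈ Set.Ioc (-π) π, γ θ = p := by
    intro p hp
    refine ⟨(p - x).arg, ⟨Complex.neg_pi_lt_arg _, Complex.arg_le_pi _⟩, ?_⟩
    have := Complex.norm_mul_exp_arg_mul_I (p - x)
    rw [mem_sphere, dist_eq_norm] at hp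
    rw [hp] at this
    simp only [hγ, this]; ring
  obtain ⟨a, ha, rfl⟩ := hpar p hp
  obtain ⟨b, hb, rfl⟩ := hpar q hq
  have hfc : Continuous (fderiv ℝ h) := hh.continuous_fderiv (by norm_num)
  have hder : ∀ θ : ℝ, HasDerivAt (fun θ => h (γ θ))
      (fderiv ℝ h (γ θ) (t * (Complex.exp (θ * Complex.I) * Complex.I))) θ := by
    intro θ
    exact ((hh.differentiable (by norm_num)) (γ θ)).hasFDerivAt.comp_hasDerivAt θ (hγd θ)
  have hcont : Continuous fun θ : ℝ =>
      (fderiv ℝ h (γ θ) (t * (Complex.exp (θ * Complex.I) * Complex.I))) := by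
    apply Continuous.clm_apply
    · exact hfc.comp hγc
    · fun_prop
  have hint := intervalIntegral.integral_eq_sub_of_hasDerivAt (a := b) (b := a)
    (fun θ _ => hder θ) (hcont.intervalIntegrable _ _)
  rw [← hint]
  have : ‖∫ (y : ℝ) in b..a, (fderiv ℝ h (γ y)) (↑t * (Complex.exp (↑y * Complex.I) * Complex.I))‖ₑ
      = ‖∫ (y : ℝ) in Set.uIoc b a, (fderiv ℝ h (γ y)) (↑t * (Complex.exp (↑y * Complex.I) * Complex.I))‖ₑ := by
    rw [← ofReal_norm, ← ofReal_norm, intervalIntegral.norm_intervalIntegral_eq]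
  rw [this]
  refine (enorm_integral_le_lintegral_enorm _).trans ?_
  calc _ ≤ ∫⁻ θ in Set.Ioc (-π) π, ‖(fderiv ℝ h (γ θ)) (↑t * (Complex.exp (↑θ * Complex.I) * Complex.I))‖ₑ := by
        apply lintegral_mono_set
        intro θ hθ
        rw [Set.mem_uIoc] at hθ
        rcases hθ with hθ | hθ
        · exact ⟨hb.1.trans hθ.1, hθ.2.trans ha.2⟩
        · exact ⟨ha.1.trans hθ.1, hθ.2.trans hb.2⟩
    _ = ∫⁻ θ in Set.Ioo (-π) π, ‖(fderiv ℝ h (γ θ)) (↑t * (Complex.exp (↑θ * Complex.I) * Complex.I))‖ₑ := by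
        rw [restrict_Ioo_eq_restrict_Ioc]
    _ ≤ _ := by
        apply lintegral_mono
        intro θ
        refine (ContinuousLinearMap.le_opENorm _ _).trans ?_
        change _ ≤ ENNReal.ofReal t * ‖fderiv ℝ h (γ θ)‖ₑ
        rw [mul_comm (ENNReal.ofReal t)]
        refine mul_le_mul_right ?_ _
        rw [← ofReal_norm]
        simp [Complex.norm_exp_ofReal_mul_I, abs_of_pos ht]

lemma circle_est_sq {E : Type*} [NormedAddCommGroup E] [NormedSpace ℝ E] [CompleteSpace E]
    {h : ℂ → E} (hh : ContDiff ℝ 1 h) (x : ℂ) {t : ℝ} (ht : 0 < t) {p q : ℂ}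
    (hp : p ∈ sphere x t) (hq : q ∈ sphere x t) :
    ‖h p - h q‖ₑ ^ 2 * ENNReal.ofReal (1 / t) ≤ ENNReal.ofReal (2 * π) * ∫⁻ θ in Set.Ioo (-π) π,
      ENNReal.ofReal t * ‖fderiv ℝ h (x + t * Complex.exp (θ * Complex.I))‖ₑ ^ 2 := by
  have hfc : Continuous (fderiv ℝ h) := hh.continuous_fderiv (by norm_num)
  have hm : Continuous fun θ : ℝ => fderiv ℝ h (x + t * Complex.exp (θ * Complex.I)) :=
    hfc.comp (by fun_prop)
  have h1 := circle_est hh x ht hp hq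
  have h2 := cs_weight (volume.restrict (Set.Ioo (-π) π)) (f := fun θ : ℝ => ENNReal.ofReal t)
    (g := fun θ : ℝ => ‖fderiv ℝ h (x + t * Complex.exp (θ * Complex.I))‖ₑ) (by fun_prop)
    hm.enorm.measurable.aemeasurable
  have h3 : ‖h p - h q‖ₑ ^ 2 ≤ _ := (pow_le_pow_left₀ (by simp) h1 2).trans h2
  rw [lintegral_const] at h3
  rw [lintegral_const_mul' _ _ ENNReal.ofReal_ne_top]
  calc _ ≤ _ := mul_le_mul_left h3 _
    _ = _ := by
      simp only [MeasurableSet.univ, Measure.restrict_apply, Set.univ_inter, Real.volume_Ioo]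
      rw [show π - -π = 2 * π by ring]
      have : ENNReal.ofReal t * ENNReal.ofReal (1 / t) = 1 := by
        rw [← ENNReal.ofReal_mul ht.le]; simp [ht.ne']
      calc _ = ENNReal.ofReal (2*π) * (ENNReal.ofReal t * ∫⁻ (a : ℝ) in Set.Ioo (-π) π,
            ‖fderiv ℝ h (x + ↑t * Complex.exp (↑a * Complex.I))‖ₑ ^ 2) * (ENNReal.ofReal t * ENNReal.ofReal (1 / t)) := by ring
        _ = _ := by rw [this, mul_one]

lemma polar_annulus (F : ℂ → ℝ≥0∞) (hF : Measurable F) (x : ℂ) {r : ℝ} (hr : 0 < r) :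
    ∫⁻ t in Set.Ioo r (2 * r), ∫⁻ θ in Set.Ioo (-π) π,
      ENNReal.ofReal t * F (x + t * Complex.exp (θ * Complex.I)) =
    ∫⁻ z in ball x (2 * r) \ closedBall x r, F z := by
  have hms : MeasurableSet (ball x (2 * r) \ closedBall x r) :=
    measurableSet_ball.diff measurableSet_closedBall
  rw [← lintegral_indicator hms, ← lintegral_add_left_eq_self _ x,
    ← Complex.lintegral_comp_polarCoord_symm]
  have hsub : Set.Ioo r (2*r) ×ˢ Set.Ioo (-π) π ⊆ polarCoord.target := by
    rw [polarCoord_target]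
    exact Set.prod_mono (fun t ht => lt_trans hr ht.1) le_rfl
  have hmt : MeasurableSet polarCoord.target := by
    rw [polarCoord_target]; exact measurableSet_Ioi.prod measurableSet_Ioo
  have hmp : MeasurableSet (Set.Ioo r (2*r) ×ˢ Set.Ioo (-π) π) :=
    measurableSet_Ioo.prod measurableSet_Ioo
  have hcont : Continuous fun p : ℝ × ℝ => x + p.1 * Complex.exp (p.2 * Complex.I) := by fun_prop
  rw [← lintegral_prod (μ := volume.restrict (Set.Ioo r (2*r))) (ν := volume.restrict (Set.Ioo (-π) π))
    (fun p : ℝ × ℝ => ENNReal.ofReal p.1 * F (x + p.1 * Complex.exp (p.2 * Complex.I))),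
    Measure.prod_restrict]
  · change ∫⁻ p in Set.Ioo r (2*r) ×ˢ Set.Ioo (-π) π, _ ∂(volume : Measure (ℝ × ℝ)) = _
    rw [← lintegral_indicator hmp, ← lintegral_indicator hmt]
    congr 1
    ext p
    have hpol : (Complex.polarCoord.symm p : ℂ) = p.1 * Complex.exp (p.2 * Complex.I) := by
      rw [Complex.polarCoord_symm_apply, Complex.exp_mul_I]; simp
    have hn : ∀ hp : 0 < p.1, dist (x + p.1 * Complex.exp (p.2 * Complex.I)) x = p.1 := by
      intro hp
      rw [dist_eq_norm]; simp [Complex.norm_exp_ofReal_mul_I, abs_of_pos hp]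
    by_cases hpt : p ∈ polarCoord.target
    · have hp0 : 0 < p.1 := by rw [polarCoord_target] at hpt; exact hpt.1
      have hp2 : p.2 ∈ Set.Ioo (-π) π := by rw [polarCoord_target] at hpt; exact hpt.2
      rw [Set.indicator_of_mem hpt, hpol]
      by_cases hq : p.1 ∈ Set.Ioo r (2*r)
      · rw [Set.indicator_of_mem (show p ∈ Set.Ioo r (2*r) ×ˢ Set.Ioo (-π) π from ⟨hq, hp2⟩), Set.indicator_of_mem]
        · simp
        · rw [Set.mem_sdiff, mem_ball, mem_closedBall, hn hp0]
          exact ⟨hq.2, not_le.2 hq.1⟩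
      · rw [Set.indicator_of_notMem (fun h => hq h.1), Set.indicator_of_notMem]
        · simp
        · rw [Set.mem_sdiff, mem_ball, mem_closedBall, hn hp0]
          rintro ⟨h1, h2⟩
          exact hq ⟨not_le.1 h2, h1⟩
    · rw [Set.indicator_of_notMem hpt, Set.indicator_of_notMem (fun h => hpt (hsub h))]
  · apply Measurable.aemeasurable
    apply Measurable.mul
    · fun_prop
    · exact hF.comp hcont.measurable

lemma lintegral_inv_two {r : ℝ} (hr : 0 < r) :
    ∫⁻ t in Set.Ioo r (2 * r), ENNReal.ofReal (1 / t) = ENNReal.ofReal (Real.log 2) := by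
  rw [← ofReal_integral_eq_lintegral_ofReal]
  · rw [← integral_Ioc_eq_integral_Ioo, ← intervalIntegral.integral_of_le (by linarith),
      integral_one_div_of_pos hr (by linarith)]
    congr 2
    field_simp
  · apply IntegrableOn.mono_set (t := Set.Icc r (2*r)) _ Set.Ioo_subset_Icc_self
    apply ContinuousOn.integrableOn_Icc
    apply ContinuousOn.div continuousOn_const continuousOn_id
    intro t ht; exact (lt_of_lt_of_le hr ht.1).ne'
  · filter_upwards [ae_restrict_mem measurableSet_Ioo] with t ht
    have : 0 < t := hr.trans ht.1
    positivity

lemma courant_lebesgue {E : Type*} [NormedAddCommGroup E] [NormedSpace ℝ E] [CompleteSpace E]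
    {h : ℂ → E} (hh : ContDiff ℝ 1 h) (x : ℂ) {r : ℝ} (hr : 0 < r) (D : ℝ≥0∞)
    (hD : ∀ t ∈ Set.Ioo r (2 * r), ∃ p ∈ sphere x t, ∃ q ∈ sphere x t, D ≤ ‖h p - h q‖ₑ ^ 2) :
    D * ENNReal.ofReal (Real.log 2) ≤ ENNReal.ofReal (2 * π) *
      ∫⁻ z in ball x (2 * r) \ closedBall x r, ‖fderiv ℝ h z‖ₑ ^ 2 := by
  have hfc : Continuous (fderiv ℝ h) := hh.continuous_fderiv (by norm_num)
  rw [← polar_annulus _ (hfc.enorm.measurable.pow_const 2) x hr,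
    ← lintegral_const_mul' _ _ ENNReal.ofReal_ne_top, ← lintegral_inv_two hr,
    ← lintegral_const_mul _ (by fun_prop)]
  apply setLIntegral_mono' measurableSet_Ioo
  intro t ht
  obtain ⟨p, hp, q, hq, hpq⟩ := hD t ht
  exact (mul_le_mul_left hpq _).trans (circle_est_sq hh x (hr.trans ht.1) hp hq)


lemma qc_enorm_sq {K : ℝ} (hK : 1 ≤ K) {Φ : ℂ → ℂ} (h : IsC1QCPlane K Φ) (z : ℂ) :
    ‖fderiv ℝ Φ z‖ₑ ^ 2 ≤ ENNReal.ofReal K * ENNReal.ofReal |(fderiv ℝ Φ z).det| := by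
  rw [← ofReal_norm, ← ENNReal.ofReal_pow (norm_nonneg _), ← ENNReal.ofReal_mul (by linarith)]
  apply ENNReal.ofReal_le_ofReal
  rw [abs_of_pos (h.2.2 z).1]
  exact (h.2.2 z).2

lemma qc_hasFD {K : ℝ} {Φ : ℂ → ℂ} (h : IsC1QCPlane K Φ) (z : ℂ) :
    HasFDerivAt Φ (fderiv ℝ Φ z) z :=
  ((h.1.differentiable (by norm_num)) z).hasFDerivAt

lemma qc_energy {K : ℝ} (hK : 1 ≤ K) {Φ : ℂ → ℂ} (h : IsC1QCPlane K Φ) {S : Set ℂ}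
    (hS : MeasurableSet S) :
    ∫⁻ z in S, ‖fderiv ℝ Φ z‖ₑ ^ 2 ≤ ENNReal.ofReal K * volume (Φ '' S) := by
  rw [← lintegral_abs_det_fderiv_eq_addHaar_image volume hS
    (fun z _ => (qc_hasFD h z).hasFDerivWithinAt) (h.2.1.1.injOn),
    ← lintegral_const_mul' _ _ ENNReal.ofReal_ne_top]
  exact lintegral_mono fun z => qc_enorm_sq hK h z

lemma qc_area_lt_top {K : ℝ} {Φ : ℂ → ℂ} (h : IsC1QCPlane K Φ) (x : ℂ) (r : ℝ) :
    volume (Φ '' ball x r) < ∞ := by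
  refine lt_of_le_of_lt (measure_mono (Set.image_mono ball_subset_closedBall)) ?_
  exact ((isCompact_closedBall x r).image h.1.continuous).measure_lt_top

lemma area_step {K : ℝ} (hK : 1 ≤ K) {Φ : ℂ → ℂ} (h : IsC1QCPlane K Φ) (x : ℂ) {r : ℝ}
    (hr : 0 < r) :
    (volume (Φ '' ball x r)).toReal * (1 + 1 / (30 * K)) ≤ (volume (Φ '' ball x (2 * r))).toReal := by
  have hc := h.1.continuous
  have ho := qc_open h
  set A := volume (Φ '' ball x r) with hA
  set A2 := volume (Φ '' ball x (2 * r)) with hA2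
  set B := volume (Φ '' (ball x (2 * r) \ closedBall x r)) with hB
  have hAt : A < ∞ := qc_area_lt_top h x r
  have hA2t : A2 < ∞ := qc_area_lt_top h x (2 * r)
  have hsum : A + B ≤ A2 := by
    rw [hA, hB, ← measure_union' _ (ho _ isOpen_ball).measurableSet, ← Set.image_union]
    · apply measure_mono
      apply Set.image_mono
      exact Set.union_subset (ball_subset_ball (by linarith)) Set.sdiff_subset
    · rw [Set.disjoint_image_iff h.2.1.1]
      rw [Set.disjoint_left]
      intro z hz hz2
      exact hz2.2 (ball_subset_closedBall hz)
  have hBt : B < ∞ := lt_of_le_of_lt (le_add_self.trans hsum) hA2t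
  have key := courant_lebesgue h.1 x hr (A / ENNReal.ofReal π) (by
    intro t ht
    have ht0 : 0 < t := hr.trans ht.1
    obtain ⟨p, hp⟩ : (sphere x t).Nonempty := NormedSpace.sphere_nonempty.2 ht0.le
    obtain ⟨q, hq, hmax⟩ := top_max ho hc x (Φ p) ht0
    refine ⟨q, hq, p, hp, ?_⟩
    apply ENNReal.div_le_of_le_mul
    have : Φ '' ball x r ⊆ closedBall (Φ p) (dist (Φ q) (Φ p)) := by
      rintro _ ⟨z, hz, rfl⟩
      rw [mem_closedBall]
      apply hmax
      exact ball_subset_closedBall (ball_subset_ball ht.1.le hz)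
    refine (measure_mono this).trans ?_
    rw [Complex.volume_closedBall, dist_eq_norm, ofReal_norm]
    apply le_of_eq
    congr 1
    rw [ENNReal.ofReal_eq_coe_nnreal pi_pos.le]; rfl)
  have key2 : A / ENNReal.ofReal π * ENNReal.ofReal (Real.log 2) ≤
      ENNReal.ofReal (2 * π) * (ENNReal.ofReal K * B) :=
    key.trans (mul_le_mul_right (qc_energy hK h (measurableSet_ball.diff measurableSet_closedBall)) _)
  have key3 := ENNReal.toReal_mono (by finiteness) key2
  have hlog : 0 ≤ Real.log 2 := Real.log_nonneg (by norm_num)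
  rw [ENNReal.toReal_mul, ENNReal.toReal_mul, ENNReal.toReal_mul, ENNReal.toReal_div,
    ENNReal.toReal_ofReal pi_pos.le, ENNReal.toReal_ofReal hlog, ENNReal.toReal_ofReal (by positivity),
    ENNReal.toReal_ofReal (by linarith)] at key3
  have hsum2 := ENNReal.toReal_mono hA2t.ne hsum
  rw [ENNReal.toReal_add hAt.ne hBt.ne] at hsum2
  have ha : 0 ≤ A.toReal := ENNReal.toReal_nonneg
  set a := A.toReal
  set b := B.toReal
  have h1 : a * Real.log 2 ≤ 2 * π ^ 2 * K * b := by
    have := mul_le_mul_of_nonneg_right key3 pi_pos.le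
    calc a * Real.log 2 = a / π * Real.log 2 * π := by field_simp
      _ ≤ _ := this
      _ = _ := by ring
  have hl2 : 0.6931471803 < Real.log 2 := Real.log_two_gt_d9
  have hpi : π < 3.15 := Real.pi_lt_d2
  have hpi0 := pi_pos
  have hb : 0 ≤ b := ENNReal.toReal_nonneg
  have hKb : 0 ≤ K * b := by positivity
  have h2 : a * (1 / (30 * K)) ≤ b := by
    rw [mul_one_div, div_le_iff₀ (by positivity)]
    have hp2 : π ^ 2 ≤ 10 := by nlinarith
    have : 2 * π ^ 2 * K * b ≤ 20 * (K * b) := by nlinarith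
    nlinarith
  linarith

lemma area_decay {K : ℝ} (hK : 1 ≤ K) {Φ : ℂ → ℂ} (h : IsC1QCPlane K Φ) (x : ℂ) {t : ℝ}
    (ht : 0 < t) (ht1 : t < 1) :
    (volume (Φ '' ball x (2 * t))).toReal ≤
      2 * t ^ (1 / (30 * K)) * (volume (Φ '' ball x 2)).toReal := by
  set ε := 1 / (30 * K) with hε
  have hε0 : 0 < ε := by positivity
  have hε1 : ε ≤ 1 := by
    rw [hε, div_le_one (by positivity)]; linarith
  have h2 : (2:ℝ) ^ ε ≤ 1 + ε := by
    have := rpow_one_add_le_one_add_mul_self (s := 1) (by norm_num) hε0.le hε1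
    norm_num at this ⊢
    exact this
  have hind : ∀ n : ℕ, (volume (Φ '' ball x (2 * (1 / 2) ^ n))).toReal ≤
      ((1 / 2 : ℝ) ^ n) ^ ε * (volume (Φ '' ball x 2)).toReal := by
    intro n
    induction n with
    | zero => simp
    | succ n ih =>
      have hs := area_step hK h x (r := 2 * (1 / 2) ^ (n + 1)) (by positivity)
      rw [show (2:ℝ) * (2 * (1 / 2) ^ (n + 1)) = 2 * (1 / 2) ^ n by ring] at hs
      have hs2 := (mul_le_mul_of_nonneg_left h2 (ENNReal.toReal_nonneg
        (a := volume (Φ '' ball x (2 * (1 / 2) ^ (n+1)))))).trans (hs.trans ih)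
      have h22 : (0:ℝ) < 2 ^ ε := by positivity
      rw [← le_div_iff₀ h22] at hs2
      refine hs2.trans (le_of_eq ?_)
      rw [pow_succ, mul_rpow (by positivity) (by norm_num), one_div, inv_rpow (by norm_num : (0:ℝ) ≤ 2)]
      field_simp
  obtain ⟨n, hn1, hn2⟩ := exists_nat_pow_near_of_lt_one ht ht1.le (by norm_num : (0:ℝ) < 1/2)
    (by norm_num)
  have hmono : (volume (Φ '' ball x (2 * t))).toReal ≤ (volume (Φ '' ball x (2 * (1 / 2) ^ n))).toReal := by
    apply ENNReal.toReal_mono (qc_area_lt_top h x _).ne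
    apply measure_mono
    apply Set.image_mono
    apply ball_subset_ball
    linarith
  refine hmono.trans ((hind n).trans ?_)
  gcongr
  calc ((1 / 2 : ℝ) ^ n) ^ ε ≤ (2 * t) ^ ε := by
        apply rpow_le_rpow (by positivity) _ hε0.le
        rw [pow_succ] at hn1; linarith
    _ = 2 ^ ε * t ^ ε := mul_rpow (by norm_num) ht.le
    _ ≤ 2 * t ^ ε := by
        gcongr; linarith


noncomputable def qq (l m s : ℝ) : ℝ := 4 * (m ^ 2 - l ^ 2) / ((s ^ 2 + l ^ 2) * (s ^ 2 + m ^ 2))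

lemma qq_radial {l m : ℝ} (hl : 0 < l) (hlm : l < m) :
    IntegrableOn (fun s => s * qq l m s) (Set.Ioi 0) ∧
    ∫ s in Set.Ioi 0, s * qq l m s = 2 * Real.log (m ^ 2 / l ^ 2) := by
  have hm : 0 < m := hl.trans hlm
  have hml : 0 < m ^ 2 - l ^ 2 := by nlinarith
  set g : ℝ → ℝ := fun s => 2 * Real.log ((s ^ 2 + l ^ 2) / (s ^ 2 + m ^ 2)) with hg
  have hd : ∀ s, HasDerivAt g (s * qq l m s) s := by
    intro s
    have hp1 : 0 < s ^ 2 + l ^ 2 := by positivity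
    have hp2 : 0 < s ^ 2 + m ^ 2 := by positivity
    have h1 : HasDerivAt (fun s : ℝ => s ^ 2 + l ^ 2) (2 * s) s := by
      simpa using (hasDerivAt_pow 2 s).add_const (l ^ 2)
    have h2 : HasDerivAt (fun s : ℝ => s ^ 2 + m ^ 2) (2 * s) s := by
      simpa using (hasDerivAt_pow 2 s).add_const (m ^ 2)
    have h3 := ((h1.fun_div h2 hp2.ne').log (div_pos hp1 hp2).ne').const_mul 2
    refine h3.congr_deriv ?_
    unfold qq
    field_simp
    ring
  have hnn : ∀ s ∈ Set.Ioi (0:ℝ), 0 ≤ s * qq l m s := by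
    intro s hs
    have hs : 0 < s := hs
    unfold qq; positivity
  have hlim : Filter.Tendsto g Filter.atTop (nhds 0) := by
    have hsq : Filter.Tendsto (fun s : ℝ => s ^ 2 + m ^ 2) Filter.atTop Filter.atTop :=
      Filter.tendsto_atTop_add_const_right _ _ (Filter.tendsto_pow_atTop (by norm_num))
    have h1 : Filter.Tendsto (fun s : ℝ => 1 - (m ^ 2 - l ^ 2) / (s ^ 2 + m ^ 2)) Filter.atTop (nhds (1 - 0)) :=
      tendsto_const_nhds.sub (hsq.const_div_atTop _)
    have h2 : Filter.Tendsto (fun s : ℝ => 2 * Real.log (1 - (m ^ 2 - l ^ 2) / (s ^ 2 + m ^ 2))) Filter.atTop (nhds (2 * Real.log (1 - 0))) :=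
      ((Real.continuousAt_log (by norm_num)).tendsto.comp h1).const_mul 2
    simp only [sub_zero, Real.log_one, mul_zero] at h2
    refine h2.congr fun s => ?_
    have hp2 : 0 < s ^ 2 + m ^ 2 := by positivity
    simp only [hg]
    congr 2
    field_simp; ring
  refine ⟨integrableOn_Ioi_deriv_of_nonneg (hd 0).continuousAt.continuousWithinAt (fun s _ => hd s) hnn hlim, ?_⟩
  rw [integral_Ioi_of_hasDerivAt_of_nonneg (hd 0).continuousAt.continuousWithinAt (fun s _ => hd s) hnn hlim]
  simp only [hg]
  rw [← inv_div (0 ^ 2 + m ^ 2), Real.log_inv]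
  norm_num

lemma qq_plane {l m : ℝ} (hl : 0 < l) (hlm : l < m) :
    ∫⁻ w : ℂ, ENNReal.ofReal (qq l m ‖w‖) = ENNReal.ofReal (4 * π * Real.log (m ^ 2 / l ^ 2)) := by
  have hm : 0 < m := hl.trans hlm
  have hml : 0 < m ^ 2 - l ^ 2 := by nlinarith
  obtain ⟨h1, h2⟩ := qq_radial hl hlm
  have hint : Integrable (fun w : ℂ => qq l m ‖w‖) := by
    rw [integrable_fun_norm_addHaar]
    simpa using h1
  rw [← ofReal_integral_eq_lintegral_ofReal hint]
  · congr 1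
    rw [integral_fun_norm_addHaar]
    simp only [Complex.finrank_real_complex, smul_eq_mul]
    norm_num
    rw [h2]
    have : volume.real (ball (0:ℂ) 1) = π := by
      simp [Measure.real, Complex.volume_ball]
    rw [this]; ring
  · filter_upwards with w
    change 0 ≤ qq l m ‖w‖
    unfold qq; positivity

noncomputable def uu (l m : ℝ) (w : ℂ) : ℝ :=
  Real.log (‖w‖ ^ 2 + l ^ 2) - Real.log (‖w‖ ^ 2 + m ^ 2)

lemma uu_contDiff {l m : ℝ} (hl : 0 < l) (hm : 0 < m) : ContDiff ℝ 1 (uu l m) := by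
  unfold uu
  apply ContDiff.sub
  · apply ContDiff.log
    · exact (contDiff_norm_sq ℝ).add contDiff_const
    · intro x; positivity
  · apply ContDiff.log
    · exact (contDiff_norm_sq ℝ).add contDiff_const
    · intro x; positivity

lemma uu_fderiv {l m : ℝ} (hl : 0 < l) (hlm : l < m) (w : ℂ) :
    ‖fderiv ℝ (uu l m) w‖ ^ 2 ≤ qq l m ‖w‖ := by
  have hm : 0 < m := hl.trans hlm
  have hml : 0 < m ^ 2 - l ^ 2 := by nlinarith
  have h0 : HasFDerivAt (fun w : ℂ => ‖w‖ ^ 2) (2 • innerSL ℝ w) w :=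
    (hasStrictFDerivAt_norm_sq w).hasFDerivAt
  have hp1 : 0 < ‖w‖ ^ 2 + l ^ 2 := by positivity
  have hp2 : 0 < ‖w‖ ^ 2 + m ^ 2 := by positivity
  have h1 := ((h0.add_const (l ^ 2)).log hp1.ne').sub ((h0.add_const (m ^ 2)).log hp2.ne')
  have h2 : fderiv ℝ (uu l m) w = ((m ^ 2 - l ^ 2) * 2 / ((‖w‖ ^ 2 + l ^ 2) * (‖w‖ ^ 2 + m ^ 2))) • innerSL ℝ w := by
    have h3 : HasFDerivAt (uu l m) _ w := h1
    rw [h3.fderiv, ← sub_smul, ← Nat.cast_smul_eq_nsmul ℝ, smul_smul]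
    congr 1
    field_simp
    push_cast
    ring
  rw [h2, norm_smul, innerSL_apply_norm, Real.norm_of_nonneg (by positivity)]
  unfold qq
  set s := ‖w‖
  rw [mul_pow, div_pow, div_mul_eq_mul_div, div_le_div_iff₀ (by positivity) (by positivity)]
  have : s ^ 2 * (m ^ 2 - l ^ 2) ≤ (s ^ 2 + l ^ 2) * (s ^ 2 + m ^ 2) := by
    nlinarith [sq_nonneg s, sq_nonneg l, sq_nonneg m, mul_nonneg (sq_nonneg s) (sq_nonneg l), mul_nonneg (sq_nonneg m) (sq_nonneg l), mul_nonneg (sq_nonneg s) (sq_nonneg s)]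
  calc ((m ^ 2 - l ^ 2) * 2) ^ 2 * s ^ 2 * ((s ^ 2 + l ^ 2) * (s ^ 2 + m ^ 2))
      = 4 * (m ^ 2 - l ^ 2) * ((s ^ 2 + l ^ 2) * (s ^ 2 + m ^ 2)) * (s ^ 2 * (m ^ 2 - l ^ 2)) := by ring
    _ ≤ 4 * (m ^ 2 - l ^ 2) * ((s ^ 2 + l ^ 2) * (s ^ 2 + m ^ 2)) * ((s ^ 2 + l ^ 2) * (s ^ 2 + m ^ 2)) := by
        gcongr
    _ = _ := by ring

lemma uu_osc {l m s1 s2 : ℝ} (hl : 0 < l) (hm : 0 < m) (h1 : 0 ≤ s1) (h1' : s1 ≤ l) (h2 : m ≤ s2) :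
    Real.log (m ^ 2 / l ^ 2) - Real.log 4 ≤
     (Real.log (s2 ^ 2 + l ^ 2) - Real.log (s2 ^ 2 + m ^ 2)) -
      (Real.log (s1 ^ 2 + l ^ 2) - Real.log (s1 ^ 2 + m ^ 2)) := by
  have a1 : Real.log (s1 ^ 2 + l ^ 2) ≤ Real.log (2 * l ^ 2) :=
    Real.log_le_log (by positivity) (by nlinarith)
  have a2 : Real.log (m ^ 2) ≤ Real.log (s1 ^ 2 + m ^ 2) :=
    Real.log_le_log (by positivity) (by nlinarith)
  have a3 : Real.log (s2 ^ 2 + m ^ 2) ≤ Real.log (2 * (s2 ^ 2 + l ^ 2)) :=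
    Real.log_le_log (by positivity) (by nlinarith)
  rw [Real.log_mul (by norm_num) (by positivity)] at a1 a3
  rw [Real.log_div (by positivity) (by positivity), show (4:ℝ) = 2 * 2 by norm_num,
    Real.log_mul (by norm_num) (by norm_num)]
  linarith

lemma comp_energy {K : ℝ} (hK : 1 ≤ K) {Φ : ℂ → ℂ} (h : IsC1QCPlane K Φ) (x : ℂ)
    {l m : ℝ} (hl : 0 < l) (hlm : l < m) (S : Set ℂ) :
    ∫⁻ z in S, ‖fderiv ℝ (fun z => uu l m (Φ z - Φ x)) z‖ₑ ^ 2 ≤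
      ENNReal.ofReal (K * (4 * π * Real.log (m ^ 2 / l ^ 2))) := by
  have hm : 0 < m := hl.trans hlm
  calc _ ≤ ∫⁻ z, ‖fderiv ℝ (fun z => uu l m (Φ z - Φ x)) z‖ₑ ^ 2 := setLIntegral_le_lintegral _ _
    _ ≤ ∫⁻ z, ENNReal.ofReal K * (ENNReal.ofReal |(fderiv ℝ Φ z).det| * ENNReal.ofReal (qq l m ‖Φ z - Φ x‖)) := by
        apply lintegral_mono
        intro z
        have hd : HasFDerivAt (fun z => uu l m (Φ z - Φ x))
            ((fderiv ℝ (uu l m) (Φ z - Φ x)).comp (fderiv ℝ Φ z)) z :=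
          HasFDerivAt.comp z (((uu_contDiff hl hm).differentiable (by norm_num)) _).hasFDerivAt
            ((qc_hasFD h z).sub_const _)
        change ‖fderiv ℝ (fun z => uu l m (Φ z - Φ x)) z‖ₑ ^ 2 ≤ _
        rw [hd.fderiv]
        calc _ ≤ (‖fderiv ℝ (uu l m) (Φ z - Φ x)‖ₑ * ‖fderiv ℝ Φ z‖ₑ) ^ 2 := by
              gcongr; exact ContinuousLinearMap.opENorm_comp_le _ _
          _ = ‖fderiv ℝ (uu l m) (Φ z - Φ x)‖ₑ ^ 2 * ‖fderiv ℝ Φ z‖ₑ ^ 2 := mul_pow _ _ _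
          _ ≤ ENNReal.ofReal (qq l m ‖Φ z - Φ x‖) * (ENNReal.ofReal K * ENNReal.ofReal |(fderiv ℝ Φ z).det|) := by
              apply mul_le_mul' _ (qc_enorm_sq hK h z)
              rw [← ofReal_norm, ← ENNReal.ofReal_pow (norm_nonneg _)]
              exact ENNReal.ofReal_le_ofReal (uu_fderiv hl hlm _)
          _ = _ := by ring
    _ = ENNReal.ofReal K * ∫⁻ w in Φ '' Set.univ, ENNReal.ofReal (qq l m ‖w - Φ x‖) := by
        rw [lintegral_const_mul' _ _ ENNReal.ofReal_ne_top,
          lintegral_image_eq_lintegral_abs_det_fderiv_mul volume MeasurableSet.univ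
            (fun z _ => (qc_hasFD h z).hasFDerivWithinAt) (h.2.1.1.injOn), Measure.restrict_univ]
    _ ≤ ENNReal.ofReal K * ∫⁻ w, ENNReal.ofReal (qq l m ‖w - Φ x‖) :=
        mul_le_mul_right (setLIntegral_le_lintegral _ _) _
    _ = ENNReal.ofReal K * ∫⁻ w : ℂ, ENNReal.ofReal (qq l m ‖w‖) := by
        rw [lintegral_sub_right_eq_self (fun w : ℂ => ENNReal.ofReal (qq l m ‖w‖))]
    _ = _ := by rw [qq_plane hl hlm, ENNReal.ofReal_mul (p := K) (by linarith)]

lemma weak_qs {K : ℝ} (hK : 1 ≤ K) {Φ : ℂ → ℂ} (h : IsC1QCPlane K Φ) (x a b : ℂ)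
    (hab : dist a x ≤ dist b x / 2) :
    dist (Φ a) (Φ x) ≤ Real.exp (100 * K) * dist (Φ b) (Φ x) := by
  by_cases hbx : b = x
  · subst hbx
    have : dist a b ≤ 0 := by simpa using hab
    have : a = b := dist_le_zero.1 this
    simp [this]
  have ho := qc_open h
  have hc := h.1.continuous
  set l := dist (Φ b) (Φ x) with hl
  set m := dist (Φ a) (Φ x) with hm
  have hl0 : 0 < l := dist_pos.2 fun he => hbx (h.2.1.1 he)
  have hE : 1 ≤ Real.exp (100 * K) := Real.one_le_exp (by linarith)
  by_cases hlm : m ≤ l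
  · nlinarith
  push Not at hlm
  have hm0 : 0 < m := hl0.trans hlm
  have hbd : 0 < dist b x := dist_pos.2 hbx
  set X := Real.log (m ^ 2 / l ^ 2) with hX
  suffices hXK : X ≤ 200 * K by
    rw [hX, Real.log_le_iff_le_exp (by positivity), div_le_iff₀ (by positivity)] at hXK
    rw [show 200 * K = 100 * K + 100 * K by ring, Real.exp_add] at hXK
    refine le_of_sq_le_sq ?_ (by positivity)
    nlinarith
  by_contra! hcon
  have hlog4 : Real.log 4 < 1.4 := by
    rw [show (4:ℝ) = 2 * 2 by norm_num, Real.log_mul (by norm_num) (by norm_num)]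
    have := Real.log_two_lt_d9
    linarith
  have key := courant_lebesgue (h := fun z => uu l m (Φ z - Φ x))
    ((uu_contDiff hl0 hm0).comp (h.1.sub contDiff_const)) x (r := dist b x / 2) (by positivity)
    (ENNReal.ofReal ((X - Real.log 4) ^ 2)) (by
      intro t ht
      have ht0 : 0 < t := lt_trans (by positivity) ht.1
      obtain ⟨p, hp, hp2⟩ := top_min ho hc h.2.1.1 x b ht0 (by linarith [ht.2])
      obtain ⟨q, hq, hq2⟩ := top_max ho hc x (Φ x) ht0
      refine ⟨q, hq, p, hp, ?_⟩
      have hq3 := hq2 a (by rw [mem_closedBall]; linarith [ht.1])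
      have := uu_osc hl0 hm0 dist_nonneg hp2 hq3
      rw [← ofReal_norm, ← ENNReal.ofReal_pow (norm_nonneg _)]
      apply ENNReal.ofReal_le_ofReal
      apply pow_le_pow_left₀ (by linarith)
      refine le_trans ?_ (le_abs_self _)
      simpa only [uu, dist_eq_norm] using this)
  have key2 := key.trans (mul_le_mul_right (comp_energy hK h x hl0 hlm _) _)
  have hX0 : 0 < X := by linarith
  rw [← ENNReal.ofReal_mul (by positivity), ← ENNReal.ofReal_mul (by positivity),
    ENNReal.ofReal_le_ofReal_iff (by positivity)] at key2
  have hl2 : 0.6931471803 < Real.log 2 := Real.log_two_gt_d9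
  have hpi : π < 3.15 := Real.pi_lt_d2
  have hpi0 := pi_pos
  have hp2 : π ^ 2 ≤ 10 := by nlinarith
  have e1 : 0.9 * X ≤ X - Real.log 4 := by linarith
  have e2 : (0.9 * X) ^ 2 ≤ (X - Real.log 4) ^ 2 := pow_le_pow_left₀ (by positivity) e1 2
  have e3 : (0.9 * X) ^ 2 * 0.69 ≤ (X - Real.log 4) ^ 2 * Real.log 2 := by
    apply mul_le_mul e2 (by linarith) (by norm_num) (by positivity)
  have e4 : 2 * π * (K * (4 * π * X)) ≤ 80 * (K * X) := by
    have : 0 ≤ K * X := by positivity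
    nlinarith
  have e5 : (0.9 * X) ^ 2 * 0.69 ≤ 80 * (K * X) := e3.trans (key2.trans e4)
  have e6 : 0.5 * X ≤ 80 * K := by
    by_contra! hh
    nlinarith
  linarith

lemma qs_iter {K : ℝ} (hK : 1 ≤ K) {Φ : ℂ → ℂ} (h : IsC1QCPlane K Φ) (b : ℂ) (n : ℕ) :
    dist (Φ (((3/2 : ℝ) ^ n : ℝ) • b)) (Φ 0) ≤ (1 + Real.exp (100 * K)) ^ n * dist (Φ b) (Φ 0) := by
  induction n with
  | zero => simp
  | succ n ih =>
    set c := ((3/2 : ℝ) ^ n : ℝ) • b with hc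
    have hc' : ((3/2 : ℝ) ^ (n+1) : ℝ) • b = (3/2 : ℝ) • c := by
      rw [hc, smul_smul, pow_succ, mul_comm]
    rw [hc']
    have h1 := weak_qs hK h c ((3/2 : ℝ) • c) 0 (by
      rw [dist_eq_norm, dist_eq_norm]
      have : (3/2 : ℝ) • c - c = (1/2 : ℝ) • c := by
        module
      rw [this, norm_smul, zero_sub, norm_neg]
      norm_num
      linarith)
    have h2 := dist_triangle (Φ ((3/2 : ℝ) • c)) (Φ c) (Φ 0)
    rw [dist_comm (Φ 0)] at h1
    calc _ ≤ (1 + Real.exp (100 * K)) * dist (Φ c) (Φ 0) := by linarith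
      _ ≤ (1 + Real.exp (100 * K)) * ((1 + Real.exp (100 * K)) ^ n * dist (Φ b) (Φ 0)) := by gcongr
      _ = _ := by ring

lemma area_doubling {K : ℝ} (hK : 1 ≤ K) {Φ : ℂ → ℂ} (h : IsC1QCPlane K Φ) (w : ℂ)
    (hw : w ∈ ball (0:ℂ) 1) :
    (volume (Φ '' ball w 2)).toReal ≤
      1024 * Real.exp (1200 * K) * (volume (Φ '' ball 0 1)).toReal := by
  have ho := qc_open h
  have hc := h.1.continuous
  obtain ⟨b, hb, hmin⟩ := (isCompact_sphere (0:ℂ) 1).exists_isMinOn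
    (f := fun z => dist (Φ z) (Φ 0)) (NormedSpace.sphere_nonempty.2 zero_le_one) (by fun_prop)
  set ρ := dist (Φ b) (Φ 0) with hρ
  have hb1 : ‖b‖ = 1 := by simpa using hb
  set E := Real.exp (100 * K) with hE
  have hE1 : 1 ≤ E := Real.one_le_exp (by linarith)
  have hρ0 : 0 ≤ ρ := dist_nonneg
  have hsub : ball (Φ 0) ρ ⊆ Φ '' ball 0 1 := by
    by_cases hρ1 : 0 < ρ
    · refine top_conn ho hc 0 one_pos (convex_ball _ _).isPreconnected (by simpa using hρ1) ?_
      intro p hp hcon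
      have := hmin hp
      rw [mem_ball] at hcon
      exact absurd hcon (not_lt.2 this)
    · rw [ball_eq_empty.2 (not_lt.1 hρ1)]; exact Set.empty_subset _
  have hsup : Φ '' ball w 2 ⊆ closedBall (Φ 0) (E * ((1 + E) ^ 5 * ρ)) := by
    rintro _ ⟨a, ha, rfl⟩
    rw [mem_closedBall]
    have ha3 : dist a 0 ≤ 3 := by
      rw [mem_ball] at ha hw
      linarith [dist_triangle a w 0]
    refine (weak_qs hK h 0 a (((3/2 : ℝ) ^ 5 : ℝ) • b) ?_).trans ?_
    · refine ha3.trans ?_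
      rw [dist_zero_right, norm_smul, hb1]
      norm_num
    · have := qs_iter hK h b 5
      gcongr
  have h1 : π * ρ ^ 2 ≤ (volume (Φ '' ball 0 1)).toReal := by
    have := ENNReal.toReal_mono (qc_area_lt_top h 0 1).ne (measure_mono (μ := volume) hsub)
    rw [Complex.volume_ball] at this
    simp only [ENNReal.toReal_mul, ENNReal.toReal_pow, ENNReal.toReal_ofReal hρ0] at this
    simpa [mul_comm] using this
  have h2 : (volume (Φ '' ball w 2)).toReal ≤ π * (E * ((1 + E) ^ 5 * ρ)) ^ 2 := by
    have := ENNReal.toReal_mono measure_closedBall_lt_top.ne (measure_mono (μ := volume) hsup)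
    rw [Complex.volume_closedBall] at this
    simp only [ENNReal.toReal_mul, ENNReal.toReal_pow] at this
    rw [ENNReal.toReal_ofReal (by positivity)] at this
    simpa [mul_comm] using this
  have h3 : E * (1 + E) ^ 5 ≤ 32 * E ^ 6 := by
    calc E * (1 + E) ^ 5 ≤ E * (2 * E) ^ 5 := by gcongr; linarith
      _ = _ := by ring
  have h4 : E ^ 12 = Real.exp (1200 * K) := by
    rw [hE, ← Real.exp_nat_mul]; congr 1; push_cast; ring
  calc _ ≤ π * (E * ((1 + E) ^ 5 * ρ)) ^ 2 := h2
    _ = (E * (1 + E) ^ 5) ^ 2 * (π * ρ ^ 2) := by ring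
    _ ≤ (32 * E ^ 6) ^ 2 * (volume (Φ '' ball 0 1)).toReal := by gcongr
    _ = 1024 * E ^ 12 * (volume (Φ '' ball 0 1)).toReal := by ring
    _ = _ := by rw [h4]


lemma lintegral_rpow01 {δ : ℝ} (hδ : 0 < δ) :
    ∫⁻ t in Set.Ioo (0:ℝ) 1, ENNReal.ofReal (t ^ (δ - 1)) = ENNReal.ofReal (1 / δ) := by
  rw [← ofReal_integral_eq_lintegral_ofReal]
  · rw [← integral_Ioc_eq_integral_Ioo, ← intervalIntegral.integral_of_le (by norm_num),
      integral_rpow (Or.inl (by linarith))]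
    simp [hδ.ne']
  · have := (intervalIntegral.intervalIntegrable_rpow' (a := 0) (b := 1) (r := δ - 1) (by linarith))
    rw [intervalIntegrable_iff_integrableOn_Ioo_of_le (by norm_num)] at this
    exact this
  · filter_upwards [ae_restrict_mem measurableSet_Ioo] with t ht
    exact rpow_nonneg ht.1.le _

lemma seg_mem {x z : ℂ} (hx : x ∈ ball (0:ℂ) 1) (hz : z ∈ ball (0:ℂ) 1) {t : ℝ}
    (ht : t ∈ Set.Icc (0:ℝ) 1) : x + t • (z - x) ∈ ball (0:ℂ) 1 := by
  have := (convex_ball (0:ℂ) 1).add_smul_sub_mem hx hz ht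
  exact this

lemma seg_est {g : ℂ → ℝ} (hg : ContDiffOn ℝ 1 g (ball 0 1)) {x z : ℂ}
    (hx : x ∈ ball (0:ℂ) 1) (hz : z ∈ ball (0:ℂ) 1) :
    ‖g x - g z‖ₑ ≤ 2 * ∫⁻ t in Set.Ioo (0:ℝ) 1, ‖fderiv ℝ g (x + t • (z - x))‖ₑ := by
  set γ : ℝ → ℂ := fun t => x + t • (z - x) with hγ
  have hγd : ∀ t : ℝ, HasDerivAt γ (z - x) t := by
    intro t
    have := ((hasDerivAt_id t).smul_const (z - x)).const_add x
    rw [one_smul] at this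
    exact this
  have hγc : Continuous γ := by fun_prop
  have hmem : ∀ t ∈ Set.uIcc (0:ℝ) 1, γ t ∈ ball (0:ℂ) 1 := by
    intro t ht
    rw [Set.uIcc_of_le zero_le_one] at ht
    exact seg_mem hx hz ht
  have hder : ∀ t ∈ Set.uIcc (0:ℝ) 1, HasDerivAt (fun t => g (γ t)) (fderiv ℝ g (γ t) (z - x)) t := by
    intro t ht
    have hd : DifferentiableAt ℝ g (γ t) :=
      (hg.contDiffAt (isOpen_ball.mem_nhds (hmem t ht))).differentiableAt (by norm_num)
    exact hd.hasFDerivAt.comp_hasDerivAt t (hγd t)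
  have hcont : ContinuousOn (fun t => fderiv ℝ g (γ t) (z - x)) (Set.uIcc (0:ℝ) 1) := by
    apply ContinuousOn.clm_apply _ continuousOn_const
    exact (hg.continuousOn_fderiv_of_isOpen isOpen_ball (by norm_num)).comp hγc.continuousOn hmem
  have hint := intervalIntegral.integral_eq_sub_of_hasDerivAt hder hcont.intervalIntegrable
  have h01 : g x - g z = -(g (γ 1) - g (γ 0)) := by simp [hγ]
  rw [h01, ← hint, enorm_neg, intervalIntegral.integral_of_le zero_le_one, integral_Ioc_eq_integral_Ioo]
  refine (enorm_integral_le_lintegral_enorm _).trans ?_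
  rw [← lintegral_const_mul' _ _ (by norm_num)]
  apply lintegral_mono
  intro t
  refine (ContinuousLinearMap.le_opENorm _ _).trans ?_
  change _ ≤ 2 * ‖fderiv ℝ g (γ t)‖ₑ
  rw [mul_comm]
  refine mul_le_mul_left ?_ _
  rw [← ofReal_norm, ← ENNReal.ofReal_ofNat]
  apply ENNReal.ofReal_le_ofReal
  rw [mem_ball, dist_zero_right] at hx hz
  linarith [norm_sub_le z x]

lemma seg_est_sq {g : ℂ → ℝ} (hg : ContDiffOn ℝ 1 g (ball 0 1)) {x z : ℂ}
    (hx : x ∈ ball (0:ℂ) 1) (hz : z ∈ ball (0:ℂ) 1) {δ : ℝ} (hδ : 0 < δ) :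
    ‖g x - g z‖ₑ ^ 2 ≤ ENNReal.ofReal (4 / δ) * ∫⁻ t in Set.Ioo (0:ℝ) 1,
      ENNReal.ofReal (t ^ (1 - δ)) * ‖fderiv ℝ g (x + t • (z - x))‖ₑ ^ 2 := by
  have hmg : Measurable fun t : ℝ => ‖fderiv ℝ g (x + t • (z - x))‖ₑ :=
    ((measurable_fderiv ℝ g).comp (by fun_prop : Continuous fun t : ℝ => x + t • (z - x)).measurable).enorm
  have hmr : ∀ s : ℝ, Measurable fun t : ℝ => ENNReal.ofReal (t ^ s) := by
    intro s; fun_prop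
  have h1 := seg_est hg hx hz
  have h2 := cs_weight (volume.restrict (Set.Ioo (0:ℝ) 1))
    (f := fun t : ℝ => ENNReal.ofReal (t ^ ((δ - 1) / 2)))
    (g := fun t : ℝ => ENNReal.ofReal (t ^ ((1 - δ) / 2)) * ‖fderiv ℝ g (x + t • (z - x))‖ₑ)
    (hmr _).aemeasurable ((hmr _).mul hmg).aemeasurable
  have e1 : ∫⁻ t in Set.Ioo (0:ℝ) 1, ‖fderiv ℝ g (x + t • (z - x))‖ₑ =
      ∫⁻ t in Set.Ioo (0:ℝ) 1, ENNReal.ofReal (t ^ ((δ - 1) / 2)) *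
        (ENNReal.ofReal (t ^ ((1 - δ) / 2)) * ‖fderiv ℝ g (x + t • (z - x))‖ₑ) := by
    apply setLIntegral_congr_fun measurableSet_Ioo
    intro t ht
    have : ENNReal.ofReal (t ^ ((δ - 1) / 2)) * ENNReal.ofReal (t ^ ((1 - δ) / 2)) = 1 := by
      rw [← ENNReal.ofReal_mul (rpow_nonneg ht.1.le _), ← rpow_add ht.1]
      ring_nf; simp
    change _ = _ * (_ * _)
    rw [← mul_assoc, this, one_mul]
  have e2 : ∫⁻ t in Set.Ioo (0:ℝ) 1, ENNReal.ofReal (t ^ ((δ - 1) / 2)) ^ 2 = ENNReal.ofReal (1 / δ) := by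
    rw [← lintegral_rpow01 hδ]
    apply setLIntegral_congr_fun measurableSet_Ioo
    intro t ht
    change _ ^ 2 = _
    rw [← ENNReal.ofReal_pow (rpow_nonneg ht.1.le _), ← rpow_natCast, ← rpow_mul ht.1.le]
    congr 2; push_cast; ring
  have e3 : ∫⁻ t in Set.Ioo (0:ℝ) 1, (ENNReal.ofReal (t ^ ((1 - δ) / 2)) * ‖fderiv ℝ g (x + t • (z - x))‖ₑ) ^ 2
      = ∫⁻ t in Set.Ioo (0:ℝ) 1, ENNReal.ofReal (t ^ (1 - δ)) * ‖fderiv ℝ g (x + t • (z - x))‖ₑ ^ 2 := by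
    apply setLIntegral_congr_fun measurableSet_Ioo
    intro t ht
    change (_ * _) ^ 2 = _ * _
    rw [mul_pow, ← ENNReal.ofReal_pow (rpow_nonneg ht.1.le _), ← rpow_natCast, ← rpow_mul ht.1.le]
    congr 3; push_cast; ring
  rw [e2, e3, ← e1] at h2
  calc _ ≤ (2 * ∫⁻ t in Set.Ioo (0:ℝ) 1, ‖fderiv ℝ g (x + t • (z - x))‖ₑ) ^ 2 :=
        pow_le_pow_left₀ (by simp) h1 2
    _ = 4 * (∫⁻ t in Set.Ioo (0:ℝ) 1, ‖fderiv ℝ g (x + t • (z - x))‖ₑ) ^ 2 := by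
        rw [mul_pow]; norm_num
    _ ≤ 4 * (ENNReal.ofReal (1 / δ) * _) := mul_le_mul_right h2 _
    _ = _ := by
        rw [← mul_assoc]
        congr 1
        rw [← ENNReal.ofReal_ofNat, ← ENNReal.ofReal_mul (by norm_num)]
        congr 1; ring

lemma scale_lint (F : ℂ → ℝ≥0∞) (hF : Measurable F) (x : ℂ) {t : ℝ} (ht : 0 < t) :
    ∫⁻ z, F (x + t • (z - x)) = ENNReal.ofReal (t ^ (-2 : ℝ)) * ∫⁻ w, F w := by
  rw [lintegral_sub_right_eq_self (fun z => F (x + t • z)) x]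
  have hF2 : Measurable fun z => F (x + z) := hF.comp (by fun_prop)
  rw [← lintegral_map (μ := volume) (f := fun z => F (x + z)) (g := fun z : ℂ => t • z) hF2
    (by fun_prop), Measure.map_addHaar_smul _ ht.ne', lintegral_smul_measure,
    lintegral_add_left_eq_self]
  rw [smul_eq_mul, Complex.finrank_real_complex, rpow_neg ht.le, abs_of_pos (by positivity)]
  norm_cast

lemma triple (J G : ℂ → ℝ≥0∞) (hJ : Measurable J) (hG : Measurable G)
    (M : ℝ → ℝ≥0∞) (hMm : Measurable M) (u : ℝ → ℝ≥0∞) (hu : Measurable u)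
    (hM : ∀ t ∈ Set.Ioo (0:ℝ) 1, ∀ w ∈ ball (0:ℂ) 1, ∫⁻ x in ball w (2 * t), J x ≤ M t)
    (hG0 : ∀ w, w ∉ ball (0:ℂ) 1 → G w = 0) :
    ∫⁻ z in ball (0:ℂ) 1, ∫⁻ x in ball (0:ℂ) 1, ∫⁻ t in Set.Ioo (0:ℝ) 1,
      J x * (u t * G (x + t • (z - x))) ≤
    (∫⁻ t in Set.Ioo (0:ℝ) 1, u t * (ENNReal.ofReal (t ^ (-2 : ℝ)) * M t)) * ∫⁻ w, G w := by
  have hH : Measurable fun p : ℂ × ℂ × ℝ => J p.2.1 * (u p.2.2 * G (p.2.1 + p.2.2 • (p.1 - p.2.1))) := by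
    apply Measurable.mul (hJ.comp (by fun_prop))
    apply Measurable.mul (hu.comp (by fun_prop))
    exact hG.comp (by fun_prop : Continuous fun p : ℂ × ℂ × ℝ => p.2.1 + p.2.2 • (p.1 - p.2.1)).measurable
  calc _ = ∫⁻ z in ball (0:ℂ) 1, ∫⁻ t in Set.Ioo (0:ℝ) 1, ∫⁻ x in ball (0:ℂ) 1,
      J x * (u t * G (x + t • (z - x))) := by
        refine lintegral_congr fun z => ?_
        apply lintegral_lintegral_swap
        exact (hH.comp (by fun_prop : Measurable fun p : ℂ × ℝ => (z, p.1, p.2))).aemeasurable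
    _ = ∫⁻ t in Set.Ioo (0:ℝ) 1, ∫⁻ z in ball (0:ℂ) 1, ∫⁻ x in ball (0:ℂ) 1,
      J x * (u t * G (x + t • (z - x))) := by
        apply lintegral_lintegral_swap
        apply Measurable.aemeasurable
        exact Measurable.lintegral_prod_right' (f := fun p : (ℂ × ℝ) × ℂ =>
          J p.2 * (u p.1.2 * G (p.2 + p.1.2 • (p.1.1 - p.2))))
          (hH.comp (by fun_prop : Measurable fun p : (ℂ × ℝ) × ℂ => (p.1.1, p.2, p.1.2)))
    _ = ∫⁻ t in Set.Ioo (0:ℝ) 1, ∫⁻ x in ball (0:ℂ) 1, ∫⁻ z in ball (0:ℂ) 1,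
      J x * (u t * G (x + t • (z - x))) := by
        refine lintegral_congr fun t => ?_
        apply lintegral_lintegral_swap
        exact (hH.comp (by fun_prop : Measurable fun p : ℂ × ℂ => (p.1, p.2, t))).aemeasurable
    _ ≤ ∫⁻ t in Set.Ioo (0:ℝ) 1, (u t * (ENNReal.ofReal (t ^ (-2 : ℝ)) * M t)) * ∫⁻ w, G w := by
        apply setLIntegral_mono' measurableSet_Ioo
        intro t ht
        have ht0 : 0 < t := ht.1
        calc _ ≤ ∫⁻ x in ball (0:ℂ) 1, ∫⁻ w, u t * ENNReal.ofReal (t ^ (-2 : ℝ)) *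
                (J x * (ball x (2 * t)).indicator G w) := by
              apply setLIntegral_mono' measurableSet_ball
              intro x hx
              have hind : Measurable ((ball x (2 * t)).indicator G) := hG.indicator measurableSet_ball
              rw [lintegral_const_mul _ (hind.const_mul _), lintegral_const_mul _ hind]
              calc _ ≤ ∫⁻ z, J x * (u t * (ball x (2 * t)).indicator G (x + t • (z - x))) := by
                    rw [← lintegral_indicator measurableSet_ball]
                    apply lintegral_mono
                    intro z
                    beta_reduce
                    by_cases hz : z ∈ ball (0:ℂ) 1
                    · rw [Set.indicator_of_mem hz, Set.indicator_of_mem]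
                      rw [mem_ball, dist_eq_norm, add_sub_cancel_left, norm_smul, Real.norm_of_nonneg ht0.le]
                      rw [mem_ball, dist_zero_right] at hx hz
                      nlinarith [norm_sub_le z x]
                    · rw [Set.indicator_of_notMem hz]; exact zero_le
                _ = J x * (u t * (ENNReal.ofReal (t ^ (-2 : ℝ)) * ∫⁻ w, (ball x (2 * t)).indicator G w)) := by
                    have hm2 : Measurable fun z => (ball x (2 * t)).indicator G (x + t • (z - x)) :=
                      hind.comp (by fun_prop)
                    rw [lintegral_const_mul _ (hm2.const_mul _), lintegral_const_mul _ hm2,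
                      scale_lint _ hind x ht0]
                _ = _ := by ring
                _ ≤ _ := le_rfl
          _ = ∫⁻ w, ∫⁻ x in ball (0:ℂ) 1, u t * ENNReal.ofReal (t ^ (-2 : ℝ)) *
                (J x * (ball x (2 * t)).indicator G w) := by
              apply lintegral_lintegral_swap
              apply Measurable.aemeasurable
              apply Measurable.const_mul
              apply Measurable.mul (hJ.comp measurable_fst)
              have : (fun p : ℂ × ℂ => (ball p.1 (2 * t)).indicator G p.2) =
                  {p : ℂ × ℂ | dist p.2 p.1 < 2 * t}.indicator (fun p => G p.2) := by
                ext p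
                simp only [Set.indicator, mem_ball, Set.mem_ofPred_eq]
              change Measurable (fun p : ℂ × ℂ => (ball p.1 (2 * t)).indicator G p.2)
              rw [this]
              apply (hG.comp measurable_snd).indicator
              exact measurableSet_lt (by fun_prop) measurable_const
          _ ≤ ∫⁻ w, (u t * (ENNReal.ofReal (t ^ (-2 : ℝ)) * M t)) * G w := by
              apply lintegral_mono
              intro w
              by_cases hw : w ∈ ball (0:ℂ) 1
              · calc _ ≤ ∫⁻ x in ball (0:ℂ) 1, u t * ENNReal.ofReal (t ^ (-2 : ℝ)) * G w *
                      (ball w (2 * t)).indicator J x := by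
                      apply lintegral_mono
                      intro x
                      beta_reduce
                      by_cases hxw : dist w x < 2 * t
                      · rw [Set.indicator_of_mem (mem_ball.2 hxw),
                          Set.indicator_of_mem (mem_ball'.2 hxw)]
                        apply le_of_eq; ring
                      · rw [Set.indicator_of_notMem (fun h => hxw (mem_ball.1 h))]
                        simp
                  _ ≤ ∫⁻ x, u t * ENNReal.ofReal (t ^ (-2 : ℝ)) * G w *
                      (ball w (2 * t)).indicator J x := setLIntegral_le_lintegral _ _
                  _ = u t * ENNReal.ofReal (t ^ (-2 : ℝ)) * G w * ∫⁻ x in ball w (2 * t), J x := by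
                      rw [lintegral_const_mul _ (hJ.indicator measurableSet_ball),
                        lintegral_indicator measurableSet_ball]
                  _ ≤ u t * ENNReal.ofReal (t ^ (-2 : ℝ)) * G w * M t := mul_le_mul_right (hM t ht w hw) _
                  _ = _ := by ring
              · have h0 := hG0 w hw
                simp [Set.indicator, h0]
          _ = _ := lintegral_const_mul _ hG
    _ ≤ _ := by
        rw [lintegral_mul_const]
        exact hu.mul (Measurable.mul (by fun_prop) hMm)


lemma poincare_disc {K : ℝ} (hK : 1 ≤ K) {Φ : ℂ → ℂ} (h : IsC1QCPlane K Φ)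
    {g : ℂ → ℝ} (hg : ContDiffOn ℝ 1 g (ball 0 1)) {B : ℝ}
    (hB : B = 1024 * Real.exp (1200 * K) * (volume (Φ '' ball 0 1)).toReal) :
    ∫⁻ z in ball (0:ℂ) 1, ∫⁻ x in ball (0:ℂ) 1,
      ENNReal.ofReal |(fderiv ℝ Φ x).det| * ‖g x - g z‖ₑ ^ 2 ≤
    ENNReal.ofReal (28800 * K ^ 2 * B) * ∫⁻ z in ball (0:ℂ) 1, ‖fderiv ℝ g z‖ₑ ^ 2 := by
  have hB0 : 0 ≤ B := by rw [hB]; positivity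
  set ε := 1 / (30 * K) with hε
  have hε0 : 0 < ε := by positivity
  set J : ℂ → ℝ≥0∞ := fun x => ENNReal.ofReal |(fderiv ℝ Φ x).det| with hJ
  have hJm : Measurable J := by
    have hfc : Continuous (fderiv ℝ Φ) := h.1.continuous_fderiv (by norm_num)
    have := (ContinuousLinearMap.continuous_det.comp hfc).abs.measurable
    exact this.ennreal_ofReal
  set G : ℂ → ℝ≥0∞ := (ball (0:ℂ) 1).indicator fun z => ‖fderiv ℝ g z‖ₑ ^ 2 with hG
  have hGm : Measurable G := by
    apply Measurable.indicator _ measurableSet_ball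
    exact (measurable_fderiv ℝ g).enorm.pow_const 2
  have htr := triple J G hJm hGm (fun t => ENNReal.ofReal (2 * t ^ ε * B)) (by fun_prop)
    (fun t => ENNReal.ofReal (t ^ (1 - ε / 2))) (by fun_prop) (by
      intro t ht w hw
      rw [lintegral_abs_det_fderiv_eq_addHaar_image volume measurableSet_ball
        (fun z _ => (qc_hasFD h z).hasFDerivWithinAt) (h.2.1.1.injOn)]
      rw [← ENNReal.ofReal_toReal (qc_area_lt_top h w (2 * t)).ne]
      apply ENNReal.ofReal_le_ofReal
      refine (area_decay hK h w ht.1 ht.2).trans ?_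
      have h0 : 0 ≤ t ^ ε := rpow_nonneg ht.1.le _
      rw [hB]
      gcongr
      exact area_doubling hK h w hw) (by
      intro w hw
      exact Set.indicator_of_notMem hw _)
  have hT : ∫⁻ t in Set.Ioo (0:ℝ) 1, ENNReal.ofReal (t ^ (1 - ε / 2)) *
      (ENNReal.ofReal (t ^ (-2 : ℝ)) * ENNReal.ofReal (2 * t ^ ε * B)) = ENNReal.ofReal (4 * B / ε) := by
    calc _ = ∫⁻ t in Set.Ioo (0:ℝ) 1, ENNReal.ofReal (2 * B) * ENNReal.ofReal (t ^ (ε / 2 - 1)) := by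
          apply setLIntegral_congr_fun measurableSet_Ioo
          intro t ht
          have ht0 : 0 < t := ht.1
          beta_reduce
          rw [← ENNReal.ofReal_mul (by positivity), ← ENNReal.ofReal_mul (by positivity),
            ← ENNReal.ofReal_mul (by positivity)]
          congr 1
          have : t ^ (ε / 2 - 1) = t ^ (1 - ε / 2) * t ^ (-2 : ℝ) * t ^ ε := by
            rw [← rpow_add ht0, ← rpow_add ht0]; congr 1; ring
          rw [this]; ring
      _ = _ := by
          rw [lintegral_const_mul' _ _ ENNReal.ofReal_ne_top, lintegral_rpow01 (by positivity),
            ← ENNReal.ofReal_mul (by positivity)]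
          congr 1; field_simp; ring
  rw [hT] at htr
  have hGi : ∫⁻ w, G w = ∫⁻ z in ball (0:ℂ) 1, ‖fderiv ℝ g z‖ₑ ^ 2 :=
    lintegral_indicator measurableSet_ball _
  rw [hGi] at htr
  calc _ ≤ ∫⁻ z in ball (0:ℂ) 1, ∫⁻ x in ball (0:ℂ) 1, ENNReal.ofReal (4 / (ε / 2)) *
        ∫⁻ t in Set.Ioo (0:ℝ) 1, J x * (ENNReal.ofReal (t ^ (1 - ε / 2)) * G (x + t • (z - x))) := by
        apply setLIntegral_mono' measurableSet_ball
        intro z hz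
        apply setLIntegral_mono' measurableSet_ball
        intro x hx
        rw [lintegral_const_mul' _ _ (by simp [hJ]), ← mul_assoc, mul_comm (ENNReal.ofReal (4 / (ε / 2))),
          mul_assoc]
        refine mul_le_mul_right ?_ _
        refine (seg_est_sq hg hx hz (by positivity : 0 < ε / 2)).trans (le_of_eq ?_)
        congr 1
        apply setLIntegral_congr_fun measurableSet_Ioo
        intro t ht
        beta_reduce
        rw [hG, Set.indicator_of_mem (seg_mem hx hz ⟨ht.1.le, ht.2.le⟩)]
    _ = ENNReal.ofReal (4 / (ε / 2)) * ∫⁻ z in ball (0:ℂ) 1, ∫⁻ x in ball (0:ℂ) 1,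
        ∫⁻ t in Set.Ioo (0:ℝ) 1, J x * (ENNReal.ofReal (t ^ (1 - ε / 2)) * G (x + t • (z - x))) := by
        rw [← lintegral_const_mul' _ _ ENNReal.ofReal_ne_top]
        refine lintegral_congr fun z => ?_
        rw [← lintegral_const_mul' _ _ ENNReal.ofReal_ne_top]
    _ ≤ ENNReal.ofReal (4 / (ε / 2)) * (ENNReal.ofReal (4 * B / ε) * _) := mul_le_mul_right htr _
    _ = _ := by
        rw [← mul_assoc, ← ENNReal.ofReal_mul (by positivity)]
        congr 2
        rw [hε]; field_simp; ring

lemma var_le {Ω : Set ℂ} (hΩ : volume Ω < ∞) {f : ℂ → ℝ}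
    (hm : MemLp f 2 (volume.restrict Ω)) (c : ℝ) :
    ENNReal.ofReal (∫ z in Ω, (f z - ⨍ w in Ω, f w) ^ 2) ≤ ∫⁻ z in Ω, ‖f z - c‖ₑ ^ 2 := by
  haveI : IsFiniteMeasure (volume.restrict Ω) := ⟨by simpa using hΩ⟩
  set μ := volume.restrict Ω
  set a := ⨍ w in Ω, f w with ha
  have hi : Integrable f μ := hm.integrable (by norm_num)
  have hma : ∀ c : ℝ, Integrable (fun z => (f z - c) ^ 2) μ := fun c =>
    (hm.sub (memLp_const c)).integrable_sq
  have h0 : ∫ z, (f z - a) ∂μ = 0 := integral_sub_average μ f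
  have h1 : ∫ z, (f z - a) ^ 2 ∂μ ≤ ∫ z, (f z - c) ^ 2 ∂μ := by
    have e : ∀ z, (f z - c) ^ 2 = ((f z - a) ^ 2 + 2 * (a - c) * (f z - a)) + (a - c) ^ 2 := by
      intro z; ring
    have i1 : Integrable (fun z => 2 * (a - c) * (f z - a)) μ := (hi.sub (integrable_const a)).const_mul _
    have i2 : Integrable (fun z => (f z - a) ^ 2 + 2 * (a - c) * (f z - a)) μ := (hma a).add i1
    rw [integral_congr_ae (Filter.Eventually.of_forall e), integral_add i2 (integrable_const _),
      integral_add (hma a) i1, integral_const_mul, h0]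
    have : 0 ≤ ∫ z, (a - c) ^ 2 ∂μ := integral_nonneg fun z => sq_nonneg _
    linarith
  calc _ ≤ ENNReal.ofReal (∫ z, (f z - c) ^ 2 ∂μ) := ENNReal.ofReal_le_ofReal h1
    _ = ∫⁻ z, ENNReal.ofReal ((f z - c) ^ 2) ∂μ :=
        ofReal_integral_eq_lintegral_ofReal (hma c) (Filter.Eventually.of_forall fun z => sq_nonneg _)
    _ = _ := by
        refine lintegral_congr fun z => ?_
        rw [← ofReal_norm, ← ENNReal.ofReal_pow (norm_nonneg _), Real.norm_eq_abs, sq_abs]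

lemma main_est {K : ℝ} (hK : 1 ≤ K) {Φ : ℂ → ℂ} (h : IsC1QCPlane K Φ)
    {Ω : Set ℂ} (hΩ : Ω = Φ '' ball 0 1) {f : ℂ → ℝ} (hf : ContDiffOn ℝ 1 f Ω)
    (hf2 : IntegrableOn (fun z => (f z) ^ 2) Ω)
    (hg2 : IntegrableOn (fun z => ‖fderiv ℝ f z‖ ^ 2) Ω) :
    π * ∫ z in Ω, (f z - ⨍ w in Ω, f w) ^ 2 ≤
      28800 * K ^ 2 * (1024 * Real.exp (1200 * K) * (volume Ω).toReal) *
        (K * ∫ z in Ω, ‖fderiv ℝ f z‖ ^ 2) := by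
  have hopen : IsOpen Ω := by rw [hΩ]; exact qc_open h _ isOpen_ball
  have hfin : volume Ω < ∞ := by rw [hΩ]; exact qc_area_lt_top h 0 1
  have hm : MemLp f 2 (volume.restrict Ω) :=
    (memLp_two_iff_integrable_sq (hf.continuousOn.aestronglyMeasurable hopen.measurableSet)).2 hf2
  set P := ∫ z in Ω, (f z - ⨍ w in Ω, f w) ^ 2 with hP
  set I := ∫ z in Ω, ‖fderiv ℝ f z‖ ^ 2 with hI
  have hI0 : 0 ≤ I := integral_nonneg fun z => by positivity
  set g : ℂ → ℝ := fun z => f (Φ z) with hg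
  have hmaps : Set.MapsTo Φ (ball 0 1) Ω := by
    rw [hΩ]; exact Set.mapsTo_image _ _
  have hgc : ContDiffOn ℝ 1 g (ball 0 1) := hf.comp h.1.contDiffOn hmaps
  have hcv : ∀ F : ℂ → ℝ≥0∞, ∫⁻ w in Ω, F w =
      ∫⁻ x in ball (0:ℂ) 1, ENNReal.ofReal |(fderiv ℝ Φ x).det| * F (Φ x) := by
    intro F
    rw [hΩ, lintegral_image_eq_lintegral_abs_det_fderiv_mul volume measurableSet_ball
            (fun z _ => (qc_hasFD h z).hasFDerivWithinAt) (h.2.1.1.injOn)]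
  have h1 : ENNReal.ofReal P * ENNReal.ofReal π ≤ ∫⁻ z in ball (0:ℂ) 1, ∫⁻ x in ball (0:ℂ) 1,
      ENNReal.ofReal |(fderiv ℝ Φ x).det| * ‖g x - g z‖ₑ ^ 2 := by
    have : ∫⁻ z in ball (0:ℂ) 1, ENNReal.ofReal P = ENNReal.ofReal P * ENNReal.ofReal π := by
      rw [setLIntegral_const, Complex.volume_ball]
      congr 1
      rw [ENNReal.ofReal_eq_coe_nnreal pi_pos.le]; simp; rfl
    rw [← this]
    apply lintegral_mono
    intro z
    refine (var_le hfin hm (g z)).trans (le_of_eq ?_)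
    rw [hcv]
  have h2 := h1.trans (poincare_disc hK h hgc rfl)
  have h3 : ∫⁻ z in ball (0:ℂ) 1, ‖fderiv ℝ g z‖ₑ ^ 2 ≤ ENNReal.ofReal (K * I) := by
    calc _ ≤ ∫⁻ z in ball (0:ℂ) 1, ENNReal.ofReal K * (ENNReal.ofReal |(fderiv ℝ Φ z).det| *
          ENNReal.ofReal (‖fderiv ℝ f (Φ z)‖ ^ 2)) := by
          apply setLIntegral_mono' measurableSet_ball
          intro z hz
          have hfd : DifferentiableAt ℝ f (Φ z) :=
            (hf.contDiffAt (hopen.mem_nhds (hmaps hz))).differentiableAt (by norm_num)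
          have hd : HasFDerivAt g ((fderiv ℝ f (Φ z)).comp (fderiv ℝ Φ z)) z :=
            HasFDerivAt.comp z hfd.hasFDerivAt (qc_hasFD h z)
          rw [hd.fderiv]
          calc _ ≤ (‖fderiv ℝ f (Φ z)‖ₑ * ‖fderiv ℝ Φ z‖ₑ) ^ 2 := by
                gcongr; exact ContinuousLinearMap.opENorm_comp_le _ _
            _ = ‖fderiv ℝ f (Φ z)‖ₑ ^ 2 * ‖fderiv ℝ Φ z‖ₑ ^ 2 := mul_pow _ _ _
            _ ≤ ‖fderiv ℝ f (Φ z)‖ₑ ^ 2 * (ENNReal.ofReal K * ENNReal.ofReal |(fderiv ℝ Φ z).det|) :=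
                mul_le_mul_right (qc_enorm_sq hK h z) _
            _ = _ := by
                rw [ENNReal.ofReal_pow (norm_nonneg _), ofReal_norm]; ring
      _ = ENNReal.ofReal K * ∫⁻ w in Ω, ENNReal.ofReal (‖fderiv ℝ f w‖ ^ 2) := by
          rw [lintegral_const_mul' _ _ ENNReal.ofReal_ne_top, hcv]
      _ = _ := by
          rw [← ofReal_integral_eq_lintegral_ofReal hg2
            (Filter.Eventually.of_forall fun z => by positivity), ← ENNReal.ofReal_mul (by linarith)]
  have h4 := h2.trans (mul_le_mul_right h3 _)
  rw [← hΩ, ← ENNReal.ofReal_mul' pi_pos.le, ← ENNReal.ofReal_mul (by positivity),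
    ENNReal.ofReal_le_ofReal_iff (by positivity)] at h4
  linarith

/-- Theorem A (Rayleigh-quotient form): for a `C¹` `K`-quasidisc `Ω`,
`2 < α < 2K²/(K²−1)` and `ν = 10^{4α}((α−2)/(α−1))(24π²K²)^α < 1`, every test
function `f` satisfies
`∬_Ω |f − f_Ω|² ≤ (K²C_α²/π)((2α−2)/(α−2))^{(2α−2)/α}·exp{K²π²(2+π⁴)²/(2 log 3)}·|Ω|·∬_Ω |∇f|²`,
where `C_α = 10⁶/[(α−1)(1−ν)]^{1/α}`. -/
theorem neumann_poincare_quasidisc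
    (K : ℝ) (hK : 1 ≤ K) (Φ : ℂ → ℂ) (hΦ : IsC1QCPlane K Φ)
    (Ω : Set ℂ) (hΩ : Ω = Φ '' Metric.ball 0 1)
    (α : ℝ) (hα : 2 < α) (hαK : α * (K ^ 2 - 1) < 2 * K ^ 2)
    (hν : (10 : ℝ) ^ (4 * α) * ((α - 2) / (α - 1)) * (24 * π ^ 2 * K ^ 2) ^ α < 1)
    (f : ℂ → ℝ) (hf : ContDiffOn ℝ 1 f Ω)
    (hf2 : IntegrableOn (fun z => (f z) ^ 2) Ω)
    (hg2 : IntegrableOn (fun z => ‖fderiv ℝ f z‖ ^ 2) Ω) :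
    ∫ z in Ω, (f z - ⨍ w in Ω, f w) ^ 2
      ≤ (K ^ 2 *
            (10 ^ 6 /
              ((α - 1) *
                (1 - (10 : ℝ) ^ (4 * α) * ((α - 2) / (α - 1)) * (24 * π ^ 2 * K ^ 2) ^ α))
                ^ (1 / α)) ^ 2 / π) *
          ((2 * α - 2) / (α - 2)) ^ ((2 * α - 2) / α) *
          Real.exp (K ^ 2 * π ^ 2 * (2 + π ^ 4) ^ 2 / (2 * Real.log 3)) *
          (volume Ω).toReal *
          ∫ z in Ω, ‖fderiv ℝ f z‖ ^ 2 := by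
  have hmain := main_est hK hΦ hΩ hf hf2 hg2
  set P := ∫ z in Ω, (f z - ⨍ w in Ω, f w) ^ 2
  set I := ∫ z in Ω, ‖fderiv ℝ f z‖ ^ 2
  have hI0 : 0 ≤ I := integral_nonneg fun z => by positivity
  set V := (volume Ω).toReal
  have hV0 : 0 ≤ V := ENNReal.toReal_nonneg
  set ν := (10 : ℝ) ^ (4 * α) * ((α - 2) / (α - 1)) * (24 * π ^ 2 * K ^ 2) ^ α with hνd
  have hα1 : 0 < α - 1 := by linarith
  have hα2 : 0 < α - 2 := by linarith
  have hν0 : 0 ≤ ν := by positivity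
  have hY0 : 0 < (α - 1) * (1 - ν) := by
    apply mul_pos hα1; linarith
  have hY1 : ((α - 1) * (1 - ν)) ^ (1 / α) ≤ 2 := by
    have hb : 1 + α * 1 ≤ (1 + 1 : ℝ) ^ α :=
      one_add_mul_self_le_rpow_one_add (by norm_num) (by linarith)
    calc ((α - 1) * (1 - ν)) ^ (1 / α) ≤ ((2:ℝ) ^ α) ^ (1 / α) := by
          apply rpow_le_rpow hY0.le _ (by positivity)
          norm_num at hb
          nlinarith
      _ = 2 := by
          rw [← rpow_mul (by norm_num), mul_one_div_cancel (by linarith), rpow_one]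
  have hYp : 0 < ((α - 1) * (1 - ν)) ^ (1 / α) := rpow_pos_of_pos hY0 _
  have hC : (5 * 10 ^ 5 : ℝ) ≤ 10 ^ 6 / ((α - 1) * (1 - ν)) ^ (1 / α) := by
    rw [le_div_iff₀ hYp]; nlinarith
  have hC2 : (5 * 10 ^ 5 : ℝ) ^ 2 ≤ (10 ^ 6 / ((α - 1) * (1 - ν)) ^ (1 / α)) ^ 2 :=
    pow_le_pow_left₀ (by norm_num) hC 2
  have hR : 1 ≤ ((2 * α - 2) / (α - 2)) ^ ((2 * α - 2) / α) := by
    apply one_le_rpow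
    · rw [le_div_iff₀ hα2]; linarith
    · apply div_nonneg <;> linarith
  have hlog3 : Real.log 3 ≤ 2 := by
    have := Real.log_le_sub_one_of_pos (by norm_num : (0:ℝ) < 3)
    linarith
  have hlog30 : 0 < Real.log 3 := Real.log_pos (by norm_num)
  have hpi3 := pi_gt_three
  have hQ : 1201 * K ≤ K ^ 2 * π ^ 2 * (2 + π ^ 4) ^ 2 / (2 * Real.log 3) := by
    rw [le_div_iff₀ (by positivity)]
    calc 1201 * K * (2 * Real.log 3) ≤ 1201 * K * 4 := by
          gcongr; linarith
      _ ≤ K ^ 2 * 3 ^ 2 * (2 + 3 ^ 4) ^ 2 := by nlinarith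
      _ ≤ _ := by gcongr
  have hE : K * Real.exp (1200 * K) ≤ Real.exp (K ^ 2 * π ^ 2 * (2 + π ^ 4) ^ 2 / (2 * Real.log 3)) := by
    calc K * Real.exp (1200 * K) ≤ Real.exp K * Real.exp (1200 * K) := by
          gcongr; linarith [Real.add_one_le_exp K]
      _ = Real.exp (1201 * K) := by rw [← Real.exp_add]; congr 1; ring
      _ ≤ _ := Real.exp_le_exp.2 hQ
  set C := (10 ^ 6 / ((α - 1) * (1 - ν)) ^ (1 / α)) ^ 2
  set R := ((2 * α - 2) / (α - 2)) ^ ((2 * α - 2) / α)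
  set E := Real.exp (K ^ 2 * π ^ 2 * (2 + π ^ 4) ^ 2 / (2 * Real.log 3))
  have hE0 : 0 < E := Real.exp_pos _
  have hVI : 0 ≤ V * I := mul_nonneg hV0 hI0
  have hfin : π * P ≤ K ^ 2 * C * R * E * (V * I) := by
    calc π * P ≤ _ := hmain
      _ = K ^ 2 * (28800 * 1024) * 1 * (K * Real.exp (1200 * K)) * (V * I) := by ring
      _ ≤ K ^ 2 * C * R * E * (V * I) := by
          gcongr
          refine le_trans ?_ hC2
          norm_num
  calc P = π * P / π := by field_simp
    _ ≤ K ^ 2 * C * R * E * (V * I) / π := by gcongr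
    _ = _ := by ring
end
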